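/- arXiv:math/0702563 — 10 statements merged into one kernel-verified Lean document; each statement's English description precedes it below -/
import Mathlib

section
/- Let A = (A₁, A₂) be a commuting 2-contraction on H. Then D_{A*} = (1_H − A₁A₁* − A₂A₂*)^{1/2} is injective if and only if D_A = (1_{H⊕H} − A*A)^{1/2} is injective. -/
/-!
Since `D (D x) = 0` is equivalent to `D x = 0` whenever `D` is injective, an operator `D` is
injective iff `D * D` is. Thus the claim compares the fixed vectors of `A A*` with those of `A* A`:
`A*` sends a nonzero fixed vector `h` of `A A*` to a fixed vector of `A* A`, which is nonzero
because `A (A* h) = h`, and `A` does the same in the opposite direction.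
-/

open ContinuousLinearMap Filter

theorem injective_iff_sq_apply_eq_zero {E : Type*} [NormedAddCommGroup E] [NormedSpace ℂ E]
    (D : E →L[ℂ] E) : Function.Injective ⇑D ↔ ∀ x, (D * D) x = 0 → x = 0 := by
  rw [injective_iff_map_eq_zero]
  constructor
  · intro h x hx
    exact h x (h _ hx)
  · intro h x hx
    exact h x (by simp [hx])

/-- The row operator composed with its adjoint is `A₁A₁* + A₂A₂*`. -/
theorem row_apply_adjoint_apply
    {H : Type*} [NormedAddCommGroup H] [InnerProductSpace ℂ H] [CompleteSpace H]
    (A₁ A₂ : H →L[ℂ] H) (Arow : WithLp 2 (H × H) →L[ℂ] H)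
    (hArow : ∀ x y : H, Arow ((WithLp.equiv 2 (H × H)).symm (x, y)) = A₁ x + A₂ y) (h : H) :
    Arow (adjoint Arow h) = A₁ (adjoint A₁ h) + A₂ (adjoint A₂ h) := by
  have hadj : adjoint Arow h =
      (WithLp.equiv 2 (H × H)).symm (adjoint A₁ h, adjoint A₂ h) := by
    refine ext_inner_right ℂ fun v => ?_
    have hv : Arow v = A₁ v.fst + A₂ v.snd := hArow v.fst v.snd
    rw [adjoint_inner_left, hv, inner_add_right, WithLp.prod_inner_apply]
    simp [adjoint_inner_left]
  rw [hadj, hArow]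

theorem Dstar_injective_iff_DA_injective
    {H : Type*} [NormedAddCommGroup H] [InnerProductSpace ℂ H] [CompleteSpace H]
    (A₁ A₂ : H →L[ℂ] H)
    (hcomm : A₁ * A₂ = A₂ * A₁)
    (hcontr : A₁ * adjoint A₁ + A₂ * adjoint A₂ ≤ 1)
    (Dstar : H →L[ℂ] H) (hDstar_pos : 0 ≤ Dstar)
    (hDstar_sq : Dstar * Dstar = 1 - A₁ * adjoint A₁ - A₂ * adjoint A₂)
    (Arow : WithLp 2 (H × H) →L[ℂ] H)
    (hArow : ∀ x y : H, Arow ((WithLp.equiv 2 (H × H)).symm (x, y)) = A₁ x + A₂ y)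
    (DA : WithLp 2 (H × H) →L[ℂ] WithLp 2 (H × H)) (hDA_pos : 0 ≤ DA)
    (hDA_sq : DA * DA = 1 - (adjoint Arow) ∘L Arow) :
    Function.Injective ⇑Dstar ↔ Function.Injective ⇑DA := by
  have hstar : ∀ x, (Dstar * Dstar) x = x - Arow (adjoint Arow x) := by
    intro x
    rw [hDstar_sq, row_apply_adjoint_apply A₁ A₂ Arow hArow, ← sub_sub]
    rfl
  have hDA : ∀ v, (DA * DA) v = v - adjoint Arow (Arow v) := by
    intro v
    rw [hDA_sq]
    rfl
  simp only [injective_iff_sq_apply_eq_zero, hstar, hDA, sub_eq_zero]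
  constructor
  · intro h v hv
    have h0 : Arow v = 0 := h _ (congrArg Arow hv)
    rw [hv, h0, map_zero]
  · intro h x hx
    have h0 : adjoint Arow x = 0 := h _ (congrArg (adjoint Arow) hx)
    rw [hx, h0, map_zero]
end

section
/- Let A = (A₁, A₂) be a commuting 2-contraction on H and (z₁,z₂) ∈ 𝔻². Then for all x, y ∈ H: θ_A(z₁,z₂)(D_A(x,y)) = D_{A*}((1_H − z₁A₁* − z₂A₂*)⁻¹((z₁x + z₂y) − (A₁x + A₂y))). -/
/-!
The proof rests on the intertwining relation `A D_A = D_{A*} A`. The squares satisfy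
`A (1 - A*A) = (1 - AA*) A`, so it suffices to pass from squares to the positive
operators themselves (`intertwine_of_sq`). Granting this,
`θ_A D_A = -A D_A + D_{A*} R Z (1 - A*A) = D_{A*} (-A + R Z - R Z A* A)`, and
`Z A* = z₁ A₁* + z₂ A₂* = 1 - R⁻¹` turns the last bracket into `R (Z - A)`.
-/

open ContinuousLinearMap Filter

/-- If `P, Q ≥ 0` and `P² A = A Q²` then `P A = A Q`. The difference `T = P A - A Q` satisfies
`P T = -T Q`, so `T* P T = -(T*T) Q` is both a positive operator and minus a product of commuting
positive operators, hence zero. Then `T Q = 0` and `P T = 0`, so `T* T = A* P T - Q A* T` gives `T T* T = 0`. -/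
theorem intertwine_of_sq {E F : Type*}
    [NormedAddCommGroup E] [InnerProductSpace ℂ E] [CompleteSpace E]
    [NormedAddCommGroup F] [InnerProductSpace ℂ F] [CompleteSpace F]
    (P : F →L[ℂ] F) (Q : E →L[ℂ] E) (A : E →L[ℂ] F) (hP : 0 ≤ P) (hQ : 0 ≤ Q)
    (h : ∀ v, P (P (A v)) = A (Q (Q v))) : P ∘L A = A ∘L Q := by
  obtain ⟨T, hT⟩ : ∃ T, T = P ∘L A - A ∘L Q := ⟨_, rfl⟩
  have hPT : ∀ v, P (T v) = -T (Q v) := by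
    intro v
    simp [hT, h]
  have hPa : adjoint P = P := (IsSelfAdjoint.of_nonneg hP)
  have hQa : adjoint Q = Q := (IsSelfAdjoint.of_nonneg hQ)
  have hS : 0 ≤ adjoint T ∘L T := by
    rw [nonneg_iff_isPositive]
    exact isPositive_adjoint_comp_self T
  have hpos : 0 ≤ adjoint T ∘L P ∘L T := by
    rw [nonneg_iff_isPositive] at hP ⊢
    exact hP.adjoint_conj T
  have hneg : adjoint T ∘L P ∘L T = -((adjoint T ∘L T) * Q) := by
    ext v
    simp [hPT]
  have hSa : IsSelfAdjoint ((adjoint T ∘L T) * Q) := by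
    have := (IsSelfAdjoint.of_nonneg hpos).neg
    rwa [hneg, neg_neg] at this
  have hcomm : Commute (adjoint T ∘L T) Q :=
    ((IsSelfAdjoint.of_nonneg hS).commute_iff (IsSelfAdjoint.of_nonneg hQ)).2 hSa
  have hSQ : 0 ≤ (adjoint T ∘L T) * Q := hcomm.mul_nonneg hS hQ
  have hzero : (adjoint T ∘L T) * Q = 0 := by
    rw [hneg] at hpos
    exact le_antisymm (neg_nonneg.1 hpos) hSQ
  have hTQ : ∀ v, T (Q v) = 0 := by
    intro v
    have h1 : adjoint T (T (Q v)) = 0 := by simpa using congrArg (fun f => f v) hzero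
    rw [← inner_self_eq_zero (𝕜 := ℂ), ← adjoint_inner_left, h1, inner_zero_left]
  have hTP : ∀ v, P (T v) = 0 := fun v => by rw [hPT, hTQ, neg_zero]
  have hTa : adjoint T = adjoint A ∘L P - Q ∘L adjoint A := by
    rw [hT, map_sub, adjoint_comp, adjoint_comp, hPa, hQa]
  have hTTT : ∀ v, T (adjoint T (T v)) = 0 := by
    intro v
    rw [hTa]
    simp [hTP, hTQ]
  have hTT : ∀ v, adjoint T (T v) = 0 := by
    intro v
    rw [← inner_self_eq_zero (𝕜 := ℂ), adjoint_inner_right, hTTT, inner_zero_left]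
  have hT0 : T = 0 := by
    ext v
    rw [zero_apply, ← inner_self_eq_zero (𝕜 := ℂ), ← adjoint_inner_left, hTT, inner_zero_left]
  rw [hT] at hT0
  exact sub_eq_zero.1 hT0

theorem theta_apply_DA
    {H : Type*} [NormedAddCommGroup H] [InnerProductSpace ℂ H] [CompleteSpace H]
    (A₁ A₂ : H →L[ℂ] H)
    (hcomm : A₁ * A₂ = A₂ * A₁)
    (hcontr : A₁ * adjoint A₁ + A₂ * adjoint A₂ ≤ 1)
    (Dstar : H →L[ℂ] H) (hDstar_pos : 0 ≤ Dstar)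
    (hDstar_sq : Dstar * Dstar = 1 - A₁ * adjoint A₁ - A₂ * adjoint A₂)
    (Arow : WithLp 2 (H × H) →L[ℂ] H)
    (hArow : ∀ x y : H, Arow ((WithLp.equiv 2 (H × H)).symm (x, y)) = A₁ x + A₂ y)
    (DA : WithLp 2 (H × H) →L[ℂ] WithLp 2 (H × H)) (hDA_pos : 0 ≤ DA)
    (hDA_sq : DA * DA = 1 - (adjoint Arow) ∘L Arow)
    (z₁ z₂ : ℂ) (hz : ‖z₁‖ ^ 2 + ‖z₂‖ ^ 2 < 1)
    (R : H →L[ℂ] H) (hR₁ : R * (1 - z₁ • adjoint A₁ - z₂ • adjoint A₂) = 1)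
    (hR₂ : (1 - z₁ • adjoint A₁ - z₂ • adjoint A₂) * R = 1)
    (Zrow : WithLp 2 (H × H) →L[ℂ] H)
    (hZrow : ∀ x y : H, Zrow ((WithLp.equiv 2 (H × H)).symm (x, y)) = z₁ • x + z₂ • y) :
    ∀ x y : H,
      (-Arow + Dstar ∘L R ∘L Zrow ∘L DA) (DA ((WithLp.equiv 2 (H × H)).symm (x, y))) =
        Dstar (R ((z₁ • x + z₂ • y) - (A₁ x + A₂ y))) := by
  have hadj : ∀ h : H, adjoint Arow h =
      (WithLp.equiv 2 (H × H)).symm (adjoint A₁ h, adjoint A₂ h) := by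
    intro h
    refine ext_inner_right ℂ fun w => ?_
    obtain ⟨⟨x, y⟩, rfl⟩ := (WithLp.equiv 2 (H × H)).symm.surjective w
    rw [adjoint_inner_left, hArow, inner_add_right, WithLp.prod_inner_apply]
    simp [adjoint_inner_left]
  have hint : Dstar ∘L Arow = Arow ∘L DA := by
    refine intertwine_of_sq Dstar DA Arow hDstar_pos hDA_pos fun v => ?_
    have h1 := congrArg (fun f => f (Arow v)) hDstar_sq
    have h2 := congrArg (fun f => f v) hDA_sq
    simp only [mul_apply_eq_comp, sub_apply, one_apply_eq_self, comp_apply] at h1 h2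
    rw [h1, h2, map_sub, hadj, hArow]
    abel
  intro x y
  set v := (WithLp.equiv 2 (H × H)).symm (x, y) with hv
  have h1 : Arow (DA v) = Dstar (Arow v) := (congrArg (fun f => f v) hint).symm
  have h2 : DA (DA v) = v - adjoint Arow (Arow v) := by
    simpa using congrArg (fun f => f v) hDA_sq
  have h3 := congrArg (fun f => f (Arow v)) hR₁
  simp only [mul_apply_eq_comp, sub_apply, one_apply_eq_self, smul_apply, map_sub, map_smul] at h3
  have h4 : Zrow (adjoint Arow (Arow v)) =
      z₁ • adjoint A₁ (Arow v) + z₂ • adjoint A₂ (Arow v) := by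
    rw [hadj, hZrow]
  simp only [add_apply, neg_apply, comp_apply]
  rw [h1, h2, map_sub, h4, ← hArow x y, ← hZrow x y, ← hv, ← map_neg, ← map_add]
  congr 1
  simp only [map_sub, map_add, map_smul]
  -- `h3` expresses `A v` as `R (R⁻¹ (A v))`, expanded.
  nth_rewrite 1 [← h3]
  abel
end

section
/- (Lemma 1.) Let A = (A₁, A₂) be a commuting 2-contraction on H such that D_{A*} is injective, let (z₁,z₂) ∈ 𝔻² and (x,y) ∈ H ⊕ H. Then A₁x + A₂y = z₁x + z₂y if and only if θ_A(z₁,z₂)(D_A(x,y)) = 0. -/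
/-!
Write `A` for the row operator, `D⋆` and `D` for the two defect operators and `v = (x, y)`. The
intertwining relation `A D = D⋆ A` and `D² = 1 - A* A` give
`θ(z) (D v) = D⋆ (-A v + R Z v - R Z A* A v)`, where `R = (1 - Z A*)⁻¹`. Since `R Z A* = R - 1`, the
right-hand side is `D⋆ R (Z v - A v)`, and both `D⋆` and `R` are injective.

The intertwining relation is lemma `intertwine_of_sq`: only `A D² = D⋆² A` is evident, and the square
roots are removed with the help of the positivity of `D`, `D⋆` and the injectivity of `D⋆`.
-/

open ContinuousLinearMap Filter

/-- An operator intertwining the squares of two positive operators `D`, `E`, with `E` injective,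
intertwines `D` and `E` themselves. The defect `X = B D - E B` satisfies `E X = -X D`, so `E (X X*)`
equals the negative operator `-X D X*`. It is also a product of two commuting positive operators, so
it vanishes, and injectivity of `E` gives `X X* = 0`. -/
theorem intertwine_of_sq_s4 {H K : Type*}
    [NormedAddCommGroup H] [InnerProductSpace ℂ H] [CompleteSpace H]
    [NormedAddCommGroup K] [InnerProductSpace ℂ K] [CompleteSpace K]
    (D : K →L[ℂ] K) (E : H →L[ℂ] H) (B : K →L[ℂ] H) (hD : 0 ≤ D) (hE : 0 ≤ E)
    (hE_inj : Function.Injective E) (h : B ∘L (D * D) = (E * E) ∘L B) :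
    B ∘L D = E ∘L B := by
  set X : K →L[ℂ] H := B ∘L D - E ∘L B with hX
  have hEX : ∀ v, E (X v) = -X (D v) := by
    intro v
    have : B (D (D v)) = E (E (B v)) := congrArg (fun T : K →L[ℂ] H => T v) h
    simp [hX, this]
  have hP : 0 ≤ X ∘L adjoint X :=
    (nonneg_iff_isPositive _).2 (isPositive_self_comp_adjoint X)
  have hQ : 0 ≤ X ∘L D ∘L adjoint X :=
    (nonneg_iff_isPositive _).2 (((nonneg_iff_isPositive _).1 hD).conj_adjoint X)
  have hEP : E * (X ∘L adjoint X) = -(X ∘L D ∘L adjoint X) := by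
    ext v
    simp [hEX]
  have hPs : IsSelfAdjoint (X ∘L adjoint X) := .of_nonneg hP
  have hc : Commute E (X ∘L adjoint X) := by
    rw [(IsSelfAdjoint.of_nonneg hE).commute_iff hPs, hEP]
    exact (IsSelfAdjoint.of_nonneg hQ).neg
  have h0 : E * (X ∘L adjoint X) = 0 :=
    le_antisymm (hEP ▸ neg_nonpos.2 hQ) (Commute.mul_nonneg hE hP hc)
  have hXX : ∀ w, adjoint X w = 0 := by
    intro w
    have h1 : X (adjoint X w) = 0 := by
      apply hE_inj
      simpa using congrArg (fun T : H →L[ℂ] H => T w) h0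
    rw [← inner_self_eq_zero (𝕜 := ℂ), adjoint_inner_left, h1, inner_zero_right]
  have hX0 : X = 0 := by
    rw [← adjoint_adjoint X, show adjoint X = 0 from ContinuousLinearMap.ext hXX, map_zero]
  exact sub_eq_zero.1 hX0

theorem lemma_one
    {H : Type*} [NormedAddCommGroup H] [InnerProductSpace ℂ H] [CompleteSpace H]
    (A₁ A₂ : H →L[ℂ] H)
    (hcomm : A₁ * A₂ = A₂ * A₁)
    (hcontr : A₁ * adjoint A₁ + A₂ * adjoint A₂ ≤ 1)
    (Dstar : H →L[ℂ] H) (hDstar_pos : 0 ≤ Dstar)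
    (hDstar_sq : Dstar * Dstar = 1 - A₁ * adjoint A₁ - A₂ * adjoint A₂)
    (hDstar_inj : Function.Injective ⇑Dstar)
    (Arow : WithLp 2 (H × H) →L[ℂ] H)
    (hArow : ∀ x y : H, Arow ((WithLp.equiv 2 (H × H)).symm (x, y)) = A₁ x + A₂ y)
    (DA : WithLp 2 (H × H) →L[ℂ] WithLp 2 (H × H)) (hDA_pos : 0 ≤ DA)
    (hDA_sq : DA * DA = 1 - (adjoint Arow) ∘L Arow)
    (z₁ z₂ : ℂ) (hz : ‖z₁‖ ^ 2 + ‖z₂‖ ^ 2 < 1)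
    (R : H →L[ℂ] H) (hR₁ : R * (1 - z₁ • adjoint A₁ - z₂ • adjoint A₂) = 1)
    (hR₂ : (1 - z₁ • adjoint A₁ - z₂ • adjoint A₂) * R = 1)
    (Zrow : WithLp 2 (H × H) →L[ℂ] H)
    (hZrow : ∀ x y : H, Zrow ((WithLp.equiv 2 (H × H)).symm (x, y)) = z₁ • x + z₂ • y)
    (x y : H) :
    A₁ x + A₂ y = z₁ • x + z₂ • y ↔ (-Arow + Dstar ∘L R ∘L Zrow ∘L DA) (DA ((WithLp.equiv 2 (H × H)).symm (x, y))) = 0 := by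
  have hadj : ∀ h : H,
      adjoint Arow h = (WithLp.equiv 2 (H × H)).symm (adjoint A₁ h, adjoint A₂ h) := by
    intro h
    refine ext_inner_right ℂ fun w => ?_
    obtain ⟨⟨a, b⟩, rfl⟩ := (WithLp.equiv 2 (H × H)).symm.surjective w
    rw [adjoint_inner_left, hArow]
    simp [WithLp.prod_inner_apply, inner_add_right, adjoint_inner_left]
  have hAA : ∀ h : H, Arow (adjoint Arow h) = A₁ (adjoint A₁ h) + A₂ (adjoint A₂ h) := by
    intro h
    rw [hadj, hArow]
  have hint : Arow ∘L DA = Dstar ∘L Arow := by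
    refine intertwine_of_sq_s4 DA Dstar Arow hDA_pos hDstar_pos hDstar_inj ?_
    rw [hDA_sq, hDstar_sq]
    ext v
    simp [hAA, sub_sub]
  rw [← hArow, ← hZrow]
  generalize (WithLp.equiv 2 (H × H)).symm (x, y) = v
  have hAD : Arow (DA v) = Dstar (Arow v) := congrArg (fun T : _ →L[ℂ] H => T v) hint
  have hDD : DA (DA v) = v - adjoint Arow (Arow v) :=
    congrArg (fun T : _ →L[ℂ] WithLp 2 (H × H) => T v) hDA_sq
  have hR : ∀ h, R (h - Zrow (adjoint Arow h)) = h := by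
    intro h
    have := congrArg (fun T : H →L[ℂ] H => T h) hR₁
    rw [hadj, hZrow, ← sub_sub]
    simpa using this
  have hR_inj : Function.Injective R :=
    Function.LeftInverse.injective (g := (1 - z₁ • adjoint A₁ - z₂ • adjoint A₂ : H →L[ℂ] H))
      fun h => congrArg (fun T : H →L[ℂ] H => T h) hR₂
  have hθ : (-Arow + Dstar ∘L R ∘L Zrow ∘L DA) (DA v) = Dstar (R (Zrow v - Arow v)) := by
    have h1 : R (Zrow v - Arow v)
        = R (Zrow (v - adjoint Arow (Arow v))) - Arow v := by
      have h2 := hR (Arow v)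
      rw [map_sub] at h2
      simp only [map_sub]
      nth_rewrite 3 [← h2]
      abel
    rw [h1, map_sub Dstar]
    simp only [add_apply, neg_apply, coe_comp, Function.comp_apply, hAD, hDD]
    abel
  rw [hθ, map_eq_zero_iff _ hDstar_inj, map_eq_zero_iff _ hR_inj, sub_eq_zero, eq_comm]
end

section
/- Let A = (A₁, A₂) be a commuting 2-contraction on H and (z₁,z₂) ∈ 𝔻². Then for every x ∈ H: (θ_A(z₁,z₂))*(D_{A*}x) = D_A( −(A₁*x, A₂*x) + ( z̄₁·u, z̄₂·u ) ), where u = (1_H − z̄₁A₁ − z̄₂A₂)⁻¹(D_{A*}²x) (the operator 1_H − z̄₁A₁ − z̄₂A₂ being invertible since (z₁,z₂) ∈ 𝔻²). -/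
/-!
Taking adjoints, `θ_A(z)* = -A* + D_A Z* (1 - z̄₁A₁ - z̄₂A₂)⁻¹ D_{A*}`, because `D_A` and `D_{A*}` are
self-adjoint and the adjoint of the resolvent `R` is the inverse `S`. Applied to `D_{A*} x`, the
second summand already has the claimed form, and the first one needs `A* D_{A*} = D_A A*`.

This intertwining relation follows from `A* D_{A*}² = A* - A*AA* = D_A² A*` by passing to square
roots (`intertwine_of_sq`): if `X a² = b² X` with `a, b ≥ 0`, then `X a = b X`. The proof does not
use functional calculus for intertwiners: `T = X a - b X` satisfies `b T = -T a`, so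
`T*T a = -T*bT ≤ 0`, while `T*T a` is a product of commuting positive operators, hence `≥ 0`.
Therefore `T a = 0 = b T`, which forces `T = 0`.
-/

open ContinuousLinearMap Filter

/-- An operator intertwining the squares of two positive operators intertwines the operators. -/
theorem intertwine_of_sq_s5 {E F : Type*} [NormedAddCommGroup E] [InnerProductSpace ℂ E]
    [CompleteSpace E] [NormedAddCommGroup F] [InnerProductSpace ℂ F] [CompleteSpace F]
    (X : E →L[ℂ] F) (a : E →L[ℂ] E) (b : F →L[ℂ] F) (ha : 0 ≤ a) (hb : 0 ≤ b)
    (h : ∀ x, X (a (a x)) = b (b (X x))) (x : E) : X (a x) = b (X x) := by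
  have ha' := (nonneg_iff_isPositive a).1 ha
  have hb' := (nonneg_iff_isPositive b).1 hb
  have haa : adjoint a = a := ha'.isSelfAdjoint.adjoint_eq
  have hbb : adjoint b = b := hb'.isSelfAdjoint.adjoint_eq
  obtain ⟨T, hT⟩ : ∃ T : E →L[ℂ] F, T = X ∘L a - b ∘L X := ⟨_, rfl⟩
  have hanti : ∀ y, b (T y) = -T (a y) := by
    intro y
    simp [hT, h]
  have hM : 0 ≤ adjoint T ∘L T :=
    (nonneg_iff_isPositive _).2 (isPositive_adjoint_comp_self T)
  have hNpos := hb'.adjoint_conj T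
  have hN : 0 ≤ adjoint T ∘L b ∘L T := (nonneg_iff_isPositive _).2 hNpos
  have hMa : (adjoint T ∘L T) * a = -(adjoint T ∘L b ∘L T) := by
    ext y
    simp [hanti]
  -- `T*T a = -T*bT` is self-adjoint, so the two self-adjoint factors commute.
  have hcom : Commute (adjoint T ∘L T) a := by
    have h1 : a * (adjoint T ∘L T) = -(adjoint T ∘L b ∘L T) := by
      have h2 := congrArg adjoint hMa
      rw [map_neg, hNpos.isSelfAdjoint.adjoint_eq] at h2
      rw [← h2]
      ext y
      simp [mul_def, adjoint_comp, haa]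
    exact hMa.trans h1.symm
  have hMa0 : (adjoint T ∘L T) * a = 0 := by
    refine le_antisymm ?_ (hcom.mul_nonneg hM ha)
    rw [hMa]
    exact neg_nonpos.2 hN
  have hzero : ∀ y, adjoint T (T y) = 0 → T y = 0 := by
    intro y hy
    rw [← inner_self_eq_zero (𝕜 := ℂ), ← adjoint_inner_left, hy, inner_zero_left]
  have hTa : ∀ y, T (a y) = 0 := fun y =>
    hzero _ (by simpa using DFunLike.congr_fun hMa0 y)
  have hTstar : ∀ w, b w = 0 → adjoint T w = a (adjoint X w) := by
    intro w hw
    simp [hT, adjoint_comp, haa, hbb, hw]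
  have hTx : T x = 0 := by
    apply hzero
    have h1 : adjoint T (T x) = a (adjoint X (T x)) := hTstar _ (by rw [hanti, hTa, neg_zero])
    rw [← inner_self_eq_zero (𝕜 := ℂ), adjoint_inner_left, h1, hTa, inner_zero_right]
  simpa [hT, sub_eq_zero] using hTx

/-- The adjoint of a row operator `(B₁, B₂) : H ⊕ H → H` is the column `(B₁*, B₂*)`. -/
theorem adjoint_row_apply {H : Type*} [NormedAddCommGroup H] [InnerProductSpace ℂ H]
    [CompleteSpace H] (B₁ B₂ : H →L[ℂ] H) (B : WithLp 2 (H × H) →L[ℂ] H)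
    (hB : ∀ x y : H, B ((WithLp.equiv 2 (H × H)).symm (x, y)) = B₁ x + B₂ y) (x : H) :
    adjoint B x = (WithLp.equiv 2 (H × H)).symm (adjoint B₁ x, adjoint B₂ x) := by
  refine ext_inner_right ℂ fun v => ?_
  have hv : B v = B₁ v.fst + B₂ v.snd := hB v.fst v.snd
  rw [adjoint_inner_left, hv, WithLp.prod_inner_apply, inner_add_right]
  simp [adjoint_inner_left]

theorem theta_adjoint_apply
    {H : Type*} [NormedAddCommGroup H] [InnerProductSpace ℂ H] [CompleteSpace H]
    (A₁ A₂ : H →L[ℂ] H)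
    (hcomm : A₁ * A₂ = A₂ * A₁)
    (hcontr : A₁ * adjoint A₁ + A₂ * adjoint A₂ ≤ 1)
    (Dstar : H →L[ℂ] H) (hDstar_pos : 0 ≤ Dstar)
    (hDstar_sq : Dstar * Dstar = 1 - A₁ * adjoint A₁ - A₂ * adjoint A₂)
    (Arow : WithLp 2 (H × H) →L[ℂ] H)
    (hArow : ∀ x y : H, Arow ((WithLp.equiv 2 (H × H)).symm (x, y)) = A₁ x + A₂ y)
    (DA : WithLp 2 (H × H) →L[ℂ] WithLp 2 (H × H)) (hDA_pos : 0 ≤ DA)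
    (hDA_sq : DA * DA = 1 - (adjoint Arow) ∘L Arow)
    (z₁ z₂ : ℂ) (hz : ‖z₁‖ ^ 2 + ‖z₂‖ ^ 2 < 1)
    (R : H →L[ℂ] H) (hR₁ : R * (1 - z₁ • adjoint A₁ - z₂ • adjoint A₂) = 1)
    (hR₂ : (1 - z₁ • adjoint A₁ - z₂ • adjoint A₂) * R = 1)
    (Zrow : WithLp 2 (H × H) →L[ℂ] H)
    (hZrow : ∀ x y : H, Zrow ((WithLp.equiv 2 (H × H)).symm (x, y)) = z₁ • x + z₂ • y)
    (S : H →L[ℂ] H)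
    (hS₁ : S * (1 - (starRingEnd ℂ z₁) • A₁ - (starRingEnd ℂ z₂) • A₂) = 1)
    (hS₂ : (1 - (starRingEnd ℂ z₁) • A₁ - (starRingEnd ℂ z₂) • A₂) * S = 1) :
    ∀ x : H,
      adjoint (-Arow + Dstar ∘L R ∘L Zrow ∘L DA) (Dstar x) =
        DA ((WithLp.equiv 2 (H × H)).symm
          (-(adjoint A₁ x) + (starRingEnd ℂ z₁) • S (Dstar (Dstar x)),
            -(adjoint A₂ x) + (starRingEnd ℂ z₂) • S (Dstar (Dstar x)))) := by
  intro x
  have hDs : adjoint Dstar = Dstar :=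
    ((nonneg_iff_isPositive _).1 hDstar_pos).isSelfAdjoint.adjoint_eq
  have hDA : adjoint DA = DA := ((nonneg_iff_isPositive _).1 hDA_pos).isSelfAdjoint.adjoint_eq
  have hAadj := adjoint_row_apply A₁ A₂ Arow hArow
  have hZadj := adjoint_row_apply (z₁ • (1 : H →L[ℂ] H)) (z₂ • (1 : H →L[ℂ] H)) Zrow
    (by simpa using hZrow)
  have hRS : adjoint R = S := by
    have h1 := congrArg star hR₁
    simp only [star_mul, star_sub, star_one, star_smul, star_eq_adjoint, adjoint_adjoint] at h1
    exact (left_inv_eq_right_inv hS₁ h1).symm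
  have hinter : adjoint Arow (Dstar x) = DA (adjoint Arow x) := by
    refine intertwine_of_sq_s5 (adjoint Arow) Dstar DA hDstar_pos hDA_pos (fun y => ?_) x
    have h1 : Dstar (Dstar y) = y - Arow (adjoint Arow y) := by
      have h2 := DFunLike.congr_fun hDstar_sq y
      rw [hAadj, hArow]
      simpa [sub_sub] using h2
    have h3 : DA (DA (adjoint Arow y)) =
        adjoint Arow y - adjoint Arow (Arow (adjoint Arow y)) := by
      simpa using DFunLike.congr_fun hDA_sq (adjoint Arow y)
    rw [h1, h3, map_sub]
  have hcol : (WithLp.equiv 2 (H × H)).symm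
      (-(adjoint A₁ x) + (starRingEnd ℂ z₁) • S (Dstar (Dstar x)),
        -(adjoint A₂ x) + (starRingEnd ℂ z₂) • S (Dstar (Dstar x))) =
      -adjoint Arow x + adjoint Zrow (S (Dstar (Dstar x))) := by
    have hone : adjoint (1 : H →L[ℂ] H) = 1 := by
      rw [← star_eq_adjoint, star_one]
    rw [hAadj, hZadj, map_smulₛₗ, map_smulₛₗ, hone]
    rfl
  rw [hcol, map_add DA, map_neg DA, ← hinter]
  simp [adjoint_comp, hDs, hDA, hRS]
end

section
/- Let A = (A₁, A₂) be a pure commuting 2-contraction on H such that D_{A*} is injective, and let (z₁,z₂) ∈ 𝔻². Then (z₁,z₂) ∈ σ_T^{(1)}(A) if and only if there exists x ≠ 0 in H such that θ_A(z₁,z₂)(D_A(x,0)) = 0 and θ_A(z₁,z₂)(D_A(0,x)) = 0. -/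
/-!
Let `Z` be the row operator of `z`. The identity `A D_A = D_{A*} A` gives
`θ_A(z) D_A = D_{A*} (-A + R Z (1 - A* A))` with `R = (1 - Z A*)⁻¹`. Multiplying the bracket by
`1 - Z A*` gives `-(1 - Z A*) A + Z (1 - A* A) = Z - A`. Since `D_{A*}` and `R` are injective,
`θ_A(z) D_A v = 0` holds exactly when `A v = Z v`. For `v = (x, 0)` and `v = (0, x)` these are the
two joint eigenvector equations, so the same `x` serves on both sides.

The identity `A D_A = D_{A*} A` is `sqrt_intertwine`: it follows from the corresponding identity
for the squares because `D_{A*}` is injective.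
-/

open ContinuousLinearMap Filter

/-- If `T` intertwines the squares of the positive operators `E` and `D`, and `D` is injective, then
`T` intertwines `E` and `D`. For `X = T E - D T` one has `D X = -X E`, so
`D (X X*) = -X E X* ≤ 0`; being self-adjoint, this is a product of commuting positive operators,
hence also `≥ 0`. It therefore vanishes, and injectivity of `D` yields `X X* = 0`. -/
theorem sqrt_intertwine {H K : Type*} [NormedAddCommGroup H] [InnerProductSpace ℂ H]
    [CompleteSpace H] [NormedAddCommGroup K] [InnerProductSpace ℂ K] [CompleteSpace K]
    (T : K →L[ℂ] H) (D : H →L[ℂ] H) (E : K →L[ℂ] K) (hD : 0 ≤ D) (hE : 0 ≤ E)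
    (hinj : Function.Injective ⇑D) (h : ∀ v, T (E (E v)) = D (D (T v))) (v : K) :
    T (E v) = D (T v) := by
  set X : K →L[ℂ] H := T ∘L E - D ∘L T with hX
  have hanti : ∀ v, D (X v) = -X (E v) := by
    intro v
    simp [hX, h]
  set P : H →L[ℂ] H := X ∘L adjoint X with hP
  have hPpos : 0 ≤ P := by
    rw [nonneg_iff_isPositive]
    exact isPositive_self_comp_adjoint X
  have hDP : D * P = -(X ∘L E ∘L adjoint X) := by
    ext w
    simp [hP, hanti]
  have hnonpos : D * P ≤ 0 := by
    rw [hDP, neg_nonpos, nonneg_iff_isPositive]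
    exact ((nonneg_iff_isPositive E).1 hE).conj_adjoint X
  have hsa : IsSelfAdjoint (D * P) := by
    have := IsSelfAdjoint.of_nonneg (neg_nonneg.2 hnonpos)
    simpa using this.neg
  have hcomm : Commute D P :=
    (IsSelfAdjoint.commute_iff (.of_nonneg hD) (.of_nonneg hPpos)).2 hsa
  have hzero : D * P = 0 := le_antisymm hnonpos (hcomm.mul_nonneg hD hPpos)
  have hadj : ∀ w, adjoint X w = 0 := by
    intro w
    have hPw : P w = 0 := hinj (by simpa using congrArg (fun S : H →L[ℂ] H => S w) hzero)
    have : inner ℂ (adjoint X w) (adjoint X w) = 0 := by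
      rw [adjoint_inner_left]
      change inner ℂ w (P w) = 0
      rw [hPw, inner_zero_right]
    exact inner_self_eq_zero.1 this
  have hXv : X v = 0 := by
    rw [← inner_self_eq_zero (𝕜 := ℂ), ← adjoint_inner_left, hadj, inner_zero_left]
  exact sub_eq_zero.1 hXv

theorem sigma_one_char
    {H : Type*} [NormedAddCommGroup H] [InnerProductSpace ℂ H] [CompleteSpace H]
    (A₁ A₂ : H →L[ℂ] H)
    (hcomm : A₁ * A₂ = A₂ * A₁)
    (hcontr : A₁ * adjoint A₁ + A₂ * adjoint A₂ ≤ 1)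
    (hpure : ∀ x : H, Tendsto (fun n => ((A₁ * adjoint A₁ + A₂ * adjoint A₂) ^ n) x) atTop (nhds 0))
    (Dstar : H →L[ℂ] H) (hDstar_pos : 0 ≤ Dstar)
    (hDstar_sq : Dstar * Dstar = 1 - A₁ * adjoint A₁ - A₂ * adjoint A₂)
    (hDstar_inj : Function.Injective ⇑Dstar)
    (Arow : WithLp 2 (H × H) →L[ℂ] H)
    (hArow : ∀ x y : H, Arow ((WithLp.equiv 2 (H × H)).symm (x, y)) = A₁ x + A₂ y)
    (DA : WithLp 2 (H × H) →L[ℂ] WithLp 2 (H × H)) (hDA_pos : 0 ≤ DA)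
    (hDA_sq : DA * DA = 1 - (adjoint Arow) ∘L Arow)
    (z₁ z₂ : ℂ) (hz : ‖z₁‖ ^ 2 + ‖z₂‖ ^ 2 < 1)
    (R : H →L[ℂ] H) (hR₁ : R * (1 - z₁ • adjoint A₁ - z₂ • adjoint A₂) = 1)
    (hR₂ : (1 - z₁ • adjoint A₁ - z₂ • adjoint A₂) * R = 1)
    (Zrow : WithLp 2 (H × H) →L[ℂ] H)
    (hZrow : ∀ x y : H, Zrow ((WithLp.equiv 2 (H × H)).symm (x, y)) = z₁ • x + z₂ • y) :
    (∃ x : H, x ≠ 0 ∧ A₁ x - z₁ • x = 0 ∧ A₂ x - z₂ • x = 0) ↔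
      ∃ x : H, x ≠ 0 ∧ (-Arow + Dstar ∘L R ∘L Zrow ∘L DA) (DA ((WithLp.equiv 2 (H × H)).symm (x, 0))) = 0 ∧
        (-Arow + Dstar ∘L R ∘L Zrow ∘L DA) (DA ((WithLp.equiv 2 (H × H)).symm (0, x))) = 0 := by
  have hadj : ∀ y : H, adjoint Arow y =
      (WithLp.equiv 2 (H × H)).symm (adjoint A₁ y, adjoint A₂ y) := by
    intro y
    refine ext_inner_right ℂ fun w => ?_
    obtain ⟨⟨a, b⟩, rfl⟩ := (WithLp.equiv 2 (H × H)).symm.surjective w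
    rw [adjoint_inner_left, hArow]
    simp [WithLp.prod_inner_apply, adjoint_inner_left, inner_add_right]
  have hAA : ∀ y : H, Arow (adjoint Arow y) = A₁ (adjoint A₁ y) + A₂ (adjoint A₂ y) := by
    intro y
    rw [hadj, hArow]
  have hZA : ∀ y : H, Zrow (adjoint Arow y) = z₁ • adjoint A₁ y + z₂ • adjoint A₂ y := by
    intro y
    rw [hadj, hZrow]
  have hDA : ∀ v, DA (DA v) = v - adjoint Arow (Arow v) := fun v => by
    simpa using congrArg (fun S : WithLp 2 (H × H) →L[ℂ] WithLp 2 (H × H) => S v) hDA_sq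
  have hDs : ∀ y, Dstar (Dstar y) = y - A₁ (adjoint A₁ y) - A₂ (adjoint A₂ y) := fun y => by
    simpa using congrArg (fun S : H →L[ℂ] H => S y) hDstar_sq
  have hR₁' : ∀ y, R (y - Zrow (adjoint Arow y)) = y := fun y => by
    have := congrArg (fun S : H →L[ℂ] H => S y) hR₁
    rw [hZA, ← sub_sub]
    simpa using this
  have hR₂' : ∀ y, R y = 0 → y = 0 := fun y hy => by
    have := congrArg (fun S : H →L[ℂ] H => S y) hR₂
    simpa [hy] using this.symm
  have hint : ∀ v, Arow (DA v) = Dstar (Arow v) :=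
    sqrt_intertwine Arow Dstar DA hDstar_pos hDA_pos hDstar_inj fun v => by
      rw [hDA, hDs, map_sub, hAA, sub_sub]
  have hθ : ∀ v, (-Arow + Dstar ∘L R ∘L Zrow ∘L DA) (DA v) = Dstar (R (Zrow v - Arow v)) := by
    intro v
    have h1 : (-Arow + Dstar ∘L R ∘L Zrow ∘L DA) (DA v) =
        -Arow (DA v) + Dstar (R (Zrow (DA (DA v)))) := rfl
    rw [h1, hint, hDA, neg_add_eq_sub, ← map_sub]
    congr 1
    -- `A v = R (A v) - R (Z A* A v)`, so the two `Z A* A v` terms cancel.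
    have hRA := hR₁' (Arow v)
    simp only [map_sub] at hRA ⊢
    rw [sub_sub, sub_right_inj]
    exact (sub_eq_iff_eq_add'.1 hRA).symm
  have hker : ∀ v, (-Arow + Dstar ∘L R ∘L Zrow ∘L DA) (DA v) = 0 ↔ Arow v - Zrow v = 0 := by
    intro v
    rw [hθ]
    constructor
    · intro h
      have := hR₂' _ (hDstar_inj (h.trans (map_zero Dstar).symm))
      rw [← neg_sub, this, neg_zero]
    · intro h
      rw [← neg_sub, h, neg_zero, map_zero, map_zero]
  simp only [hker, hArow, hZrow, map_zero, smul_zero, add_zero, zero_add]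
end

section
/- (Part of Proposition 4.1.) Let A = (A₁, A₂) be a commuting 2-contraction on H and λ = (λ₁,λ₂) ∈ 𝔻², λ ≠ 0. Then the pair (B₁(λ), B₂(λ)) of components of Φ_λ(A) is a commuting 2-contraction: B₁(λ)B₂(λ) = B₂(λ)B₁(λ) and B₁(λ)B₁(λ)* + B₂(λ)B₂(λ)* ≤ 1_H. -/
/-!
Write `Λ`, `A`, `D` for the row operators `Lrow`, `Arow` and the defect operator `DL`, and put
`M = A Λ* = μ̄₁ A₁ + μ̄₂ A₂`, `T = (1 - M)⁻¹`, so that `Φ = Λ - s T A D`.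

Since `Λ Λ* = (1 - s²) 1`, the positive operator `1 - (1 + s)⁻¹ Λ*Λ` squares to `1 - Λ*Λ`, hence equals
`D` by uniqueness of positive square roots (`defect_eq`). This makes the components explicit:
`Bᵢ = μᵢ - s T (Aᵢ - (1 + s)⁻¹ μᵢ M)`. They lie in the algebra generated by the commuting operators
`A₁`, `A₂`, `T`, so they commute.

The same formula gives `D Λ* = s Λ*`, from which `1 - Φ Φ* = s² T (1 - A A*) T*`
(`one_sub_phi_mul_adjoint`). The right-hand side is positive because `A` is a row contraction, and
`Φ Φ* = B₁ B₁* + B₂ B₂*` (`row_comp_adjoint`).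
-/

open ContinuousLinearMap Filter

section Helpers

variable {H : Type*} [NormedAddCommGroup H] [InnerProductSpace ℂ H] [CompleteSpace H]

theorem adjoint_row_apply_s10 (R : WithLp 2 (H × H) →L[ℂ] H) (R₁ R₂ : H →L[ℂ] H)
    (hR : ∀ x y : H, R ((WithLp.equiv 2 (H × H)).symm (x, y)) = R₁ x + R₂ y) (h : H) :
    adjoint R h = (WithLp.equiv 2 (H × H)).symm (adjoint R₁ h, adjoint R₂ h) := by
  refine ext_inner_right ℂ fun v => ?_
  obtain ⟨⟨x, y⟩, rfl⟩ := (WithLp.equiv 2 (H × H)).symm.surjective v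
  rw [adjoint_inner_left, hR, inner_add_right]
  simp [WithLp.prod_inner_apply, adjoint_inner_left]

theorem row_comp_adjoint (R S : WithLp 2 (H × H) →L[ℂ] H) (R₁ R₂ S₁ S₂ : H →L[ℂ] H)
    (hR : ∀ x y : H, R ((WithLp.equiv 2 (H × H)).symm (x, y)) = R₁ x + R₂ y)
    (hS : ∀ x y : H, S ((WithLp.equiv 2 (H × H)).symm (x, y)) = S₁ x + S₂ y) :
    R ∘L adjoint S = R₁ * adjoint S₁ + R₂ * adjoint S₂ := by
  ext h
  simp only [comp_apply, adjoint_row_apply_s10 S S₁ S₂ hS, hR, add_apply]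
  rfl

/-- If `Λ Λ*` is the scalar `1 - s²`, the positive square root of `1 - Λ*Λ` is
`1 - (1 + s)⁻¹ Λ*Λ`. -/
theorem defect_eq {K : Type*} [NormedAddCommGroup K] [InnerProductSpace ℂ K] [CompleteSpace K]
    (L : K →L[ℂ] H) (D : K →L[ℂ] K) (s : ℝ) (hs : 0 ≤ s)
    (hL : L ∘L adjoint L = ((1 : ℂ) - (s : ℂ) ^ 2) • (1 : H →L[ℂ] H))
    (hD : 0 ≤ D) (hDD : D * D = 1 - adjoint L ∘L L) :
    D = 1 - ((1 + s : ℝ) : ℂ)⁻¹ • (adjoint L ∘L L) := by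
  set P : K →L[ℂ] K := adjoint L ∘L L with hP
  set c : ℝ := (1 + s)⁻¹ with hc
  have hs1 : (0 : ℝ) < 1 + s := by linarith
  have hs1' : (1 + s : ℂ) ≠ 0 := by exact_mod_cast hs1.ne'
  have hPP : P * P = ((1 : ℂ) - (s : ℂ) ^ 2) • P := by
    have : P * P = adjoint L ∘L (L ∘L adjoint L) ∘L L := rfl
    rw [this, hL, hP]
    ext x
    simp
  have hE : (1 : K →L[ℂ] K) - ((1 + s : ℝ) : ℂ)⁻¹ • P = (1 - c) • (1 : K →L[ℂ] K) + c • (D * D) := by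
    have h1 : ((1 + s : ℝ) : ℂ)⁻¹ • P = c • P := by
      rw [← Complex.ofReal_inv, Complex.coe_smul]
    rw [h1, hDD]
    module
  have hDs : IsSelfAdjoint D := .of_nonneg hD
  have hDDpos : 0 ≤ D * D := hDs.mul_self_nonneg
  -- positivity is read off from the convex combination `(1 - c) 1 + c D²`
  have hEpos : 0 ≤ (1 : K →L[ℂ] K) - ((1 + s : ℝ) : ℂ)⁻¹ • P := by
    rw [hE]
    have hc0 : 0 ≤ c := by positivity
    have hc1 : 0 ≤ 1 - c := sub_nonneg.2 (inv_le_one_of_one_le₀ (by linarith))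
    exact add_nonneg (smul_nonneg hc1 zero_le_one) (smul_nonneg hc0 hDDpos)
  have hEE : ((1 : K →L[ℂ] K) - ((1 + s : ℝ) : ℂ)⁻¹ • P) * (1 - ((1 + s : ℝ) : ℂ)⁻¹ • P) = D * D := by
    rw [hDD]
    simp only [sub_mul, mul_sub, one_mul, mul_one, smul_mul_assoc, mul_smul_comm, hPP]
    push_cast
    match_scalars <;> field_simp <;> ring
  rw [← CFC.sqrt_unique (a := D * D) (b := D) rfl hD, CFC.sqrt_unique hEE hEpos]

/-- The defect identity `1 - Φ Φ* = s² T (1 - A A*) T*` for `Φ = Λ - s T A D`. -/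
theorem one_sub_phi_mul_adjoint {K : Type*} [NormedAddCommGroup K] [InnerProductSpace ℂ K]
    [CompleteSpace K] (L A : K →L[ℂ] H) (D : K →L[ℂ] K) (T : H →L[ℂ] H) (s : ℝ)
    (hL : L ∘L adjoint L = ((1 : ℂ) - (s : ℂ) ^ 2) • (1 : H →L[ℂ] H))
    (hD : adjoint D = D) (hDD : D * D = 1 - adjoint L ∘L L)
    (hDL : D ∘L adjoint L = (s : ℂ) • adjoint L)
    (hT : T * (1 - A ∘L adjoint L) = 1) :
    1 - (L - (s : ℂ) • (T ∘L A ∘L D)) ∘L adjoint (L - (s : ℂ) • (T ∘L A ∘L D))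
      = ((s : ℂ) ^ 2) • (T * (1 - A ∘L adjoint A) * adjoint T) := by
  have hLD : L ∘L D = (s : ℂ) • L := by
    have := congrArg adjoint hDL
    rwa [adjoint_comp, adjoint_adjoint, hD, map_smulₛₗ, adjoint_adjoint,
      Complex.conj_ofReal] at this
  set M : H →L[ℂ] H := A ∘L adjoint L with hM
  have hM' : adjoint M = L ∘L adjoint A := by simp [hM, adjoint_comp]
  have hTM : T * M = T - 1 := by
    rw [mul_sub, mul_one] at hT
    rw [← hT]; abel
  have hMT : adjoint M * adjoint T = adjoint T - 1 := by
    have := congrArg star hTM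
    simpa [star_mul, star_eq_adjoint] using this
  have hWL : (T ∘L A ∘L D) ∘L adjoint L = (s : ℂ) • (T * M) := by
    have : (T ∘L A ∘L D) ∘L adjoint L = T ∘L A ∘L (D ∘L adjoint L) := rfl
    rw [this, hDL]
    ext x; simp [hM]
  have hLW : L ∘L (D ∘L adjoint A ∘L adjoint T) = (s : ℂ) • (adjoint M * adjoint T) := by
    have : L ∘L (D ∘L adjoint A ∘L adjoint T) = (L ∘L D) ∘L adjoint A ∘L adjoint T := rfl
    rw [this, hLD, hM']
    ext x; simp
  have hWW : (T ∘L A ∘L D) ∘L (D ∘L adjoint A ∘L adjoint T)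
      = T * (A ∘L adjoint A) * adjoint T - (T * M) * (adjoint M * adjoint T) := by
    have : (T ∘L A ∘L D) ∘L (D ∘L adjoint A ∘L adjoint T)
      = T ∘L A ∘L (D * D) ∘L adjoint A ∘L adjoint T := rfl
    rw [this, hDD, hM', hM]
    ext x; simp
  have hadj : adjoint (L - (s : ℂ) • (T ∘L A ∘L D))
      = adjoint L - (s : ℂ) • (D ∘L adjoint A ∘L adjoint T) := by
    rw [map_sub, map_smulₛₗ, adjoint_comp, adjoint_comp, hD, Complex.conj_ofReal]
    rfl
  rw [hadj]
  simp only [sub_comp, comp_sub, smul_comp, comp_smul, hL, hWL, hLW, hWW, hTM, hMT]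
  simp only [sub_mul, mul_sub, one_mul, mul_one]
  module

end Helpers

theorem phi_of_A_is_two_contraction
    {H : Type*} [NormedAddCommGroup H] [InnerProductSpace ℂ H] [CompleteSpace H]
    (A₁ A₂ : H →L[ℂ] H)
    (hcomm : A₁ * A₂ = A₂ * A₁)
    (hcontr : A₁ * adjoint A₁ + A₂ * adjoint A₂ ≤ 1)
    (Arow : WithLp 2 (H × H) →L[ℂ] H)
    (hArow : ∀ x y : H, Arow ((WithLp.equiv 2 (H × H)).symm (x, y)) = A₁ x + A₂ y)
    (μ₁ μ₂ : ℂ) (hμ : ‖μ₁‖ ^ 2 + ‖μ₂‖ ^ 2 < 1) (hμ0 : (μ₁, μ₂) ≠ ((0 : ℂ), (0 : ℂ)))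
    (s : ℝ) (hs : s = Real.sqrt (1 - ‖μ₁‖ ^ 2 - ‖μ₂‖ ^ 2))
    (Lrow : WithLp 2 (H × H) →L[ℂ] H)
    (hLrow : ∀ x y : H, Lrow ((WithLp.equiv 2 (H × H)).symm (x, y)) = μ₁ • x + μ₂ • y)
    (DL : WithLp 2 (H × H) →L[ℂ] WithLp 2 (H × H)) (hDL_pos : 0 ≤ DL)
    (hDL_sq : DL * DL = 1 - (adjoint Lrow) ∘L Lrow)
    (T₁ : H →L[ℂ] H) (hT₁ : T₁ * (1 - Arow ∘L adjoint Lrow) = 1)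
    (hT₁' : (1 - Arow ∘L adjoint Lrow) * T₁ = 1)
    (B₁ B₂ : H →L[ℂ] H)
    (hB : ∀ x y : H, (Lrow - (s : ℂ) • (T₁ ∘L Arow ∘L DL)) ((WithLp.equiv 2 (H × H)).symm (x, y)) = B₁ x + B₂ y) :
    B₁ * B₂ = B₂ * B₁ ∧ B₁ * adjoint B₁ + B₂ * adjoint B₂ ≤ 1 := by
  have hs0 : 0 ≤ s := hs ▸ Real.sqrt_nonneg _
  have hs2 : s ^ 2 = 1 - ‖μ₁‖ ^ 2 - ‖μ₂‖ ^ 2 := by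
    rw [hs, Real.sq_sqrt (by linarith)]
  have hLrow' : ∀ x y : H, Lrow ((WithLp.equiv 2 (H × H)).symm (x, y))
      = (μ₁ • (1 : H →L[ℂ] H)) x + (μ₂ • (1 : H →L[ℂ] H)) y := by
    intro x y; simpa using hLrow x y
  have hadj1 : ∀ μ : ℂ, adjoint (μ • (1 : H →L[ℂ] H)) = (starRingEnd ℂ μ) • 1 := by
    intro μ
    rw [map_smulₛₗ, ← star_eq_adjoint, star_one]
  have hLL : Lrow ∘L adjoint Lrow = ((1 : ℂ) - (s : ℂ) ^ 2) • (1 : H →L[ℂ] H) := by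
    rw [row_comp_adjoint _ _ _ _ _ _ hLrow' hLrow', hadj1, hadj1]
    have : (1 : ℂ) - (s : ℂ) ^ 2 = μ₁ * starRingEnd ℂ μ₁ + μ₂ * starRingEnd ℂ μ₂ := by
      rw [Complex.mul_conj', Complex.mul_conj']
      exact_mod_cast (by linarith : 1 - s ^ 2 = ‖μ₁‖ ^ 2 + ‖μ₂‖ ^ 2)
    rw [this]
    simp only [mul_smul_comm, mul_one]
    module
  have hM : Arow ∘L adjoint Lrow = starRingEnd ℂ μ₁ • A₁ + starRingEnd ℂ μ₂ • A₂ := by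
    rw [row_comp_adjoint _ _ _ _ _ _ hArow hLrow', hadj1, hadj1]
    simp
  have hDL := defect_eq Lrow DL s hs0 hLL hDL_pos hDL_sq
  constructor
  · set M : H →L[ℂ] H := Arow ∘L adjoint Lrow with hMdef
    set c : ℂ := ((1 + s : ℝ) : ℂ)⁻¹ with hc
    have hΦ : ∀ x y : H, B₁ x + B₂ y = μ₁ • x + μ₂ • y
        - (s : ℂ) • T₁ (A₁ x + A₂ y - c • M (μ₁ • x + μ₂ • y)) := by
      intro x y
      rw [← hB, sub_apply, hLrow, smul_apply, comp_apply, comp_apply, hDL, sub_apply, map_sub,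
        one_apply_eq_self, hArow, smul_apply, map_smul, comp_apply, hLrow]
      rfl
    have hB₁ : B₁ = μ₁ • 1 - (s : ℂ) • (T₁ * (A₁ - (c * μ₁) • M)) := by
      ext x
      have := hΦ x 0
      simpa [mul_smul] using this
    have hB₂ : B₂ = μ₂ • 1 - (s : ℂ) • (T₁ * (A₂ - (c * μ₂) • M)) := by
      ext x
      have := hΦ 0 x
      simpa [mul_smul] using this
    have c12 : Commute A₁ A₂ := hcomm
    have cM1 : Commute M A₁ := by
      rw [hM]; exact ((Commute.refl A₁).smul_left _).add_left (c12.symm.smul_left _)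
    have cM2 : Commute M A₂ := by
      rw [hM]; exact (c12.smul_left _).add_left ((Commute.refl A₂).smul_left _)
    -- `T₁` is the inverse of `1 - M`, so it commutes with whatever `M` commutes with
    have cT : ∀ X : H →L[ℂ] H, Commute M X → Commute T₁ X := by
      intro X hX
      let u : (H →L[ℂ] H)ˣ := ⟨1 - M, T₁, hT₁', hT₁⟩
      have hu : Commute (u : H →L[ℂ] H) X := (Commute.one_left X).sub_left hX
      exact hu.units_inv_left
    have cX : Commute (A₁ - (c * μ₁) • M) (A₂ - (c * μ₂) • M) :=
      (c12.sub_right (cM1.symm.smul_right _)).sub_left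
        ((cM2.sub_right ((Commute.refl M).smul_right _)).smul_left _)
    have cT1 : Commute T₁ (A₁ - (c * μ₁) • M) :=
      cT _ (cM1.sub_right ((Commute.refl M).smul_right _))
    have cT2 : Commute T₁ (A₂ - (c * μ₂) • M) :=
      cT _ (cM2.sub_right ((Commute.refl M).smul_right _))
    have key : Commute (T₁ * (A₁ - (c * μ₁) • M)) (T₁ * (A₂ - (c * μ₂) • M)) :=
      ((Commute.refl T₁).mul_right cT2).mul_left (cT1.symm.mul_right cX)
    have : Commute B₁ B₂ := by
      rw [hB₁, hB₂]
      exact (((Commute.one_left _).smul_left _).sub_left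
        ((((Commute.one_right _).smul_right _).sub_right (key.smul_right _)).smul_left _))
    exact this
  · have hDLL : DL ∘L adjoint Lrow = (s : ℂ) • adjoint Lrow := by
      have hs1' : (1 + s : ℂ) ≠ 0 := by
        exact_mod_cast (by linarith : (0 : ℝ) < 1 + s).ne'
      have h2 : (adjoint Lrow ∘L Lrow) ∘L adjoint Lrow
          = ((1 : ℂ) - (s : ℂ) ^ 2) • adjoint Lrow := by
        rw [ContinuousLinearMap.comp_assoc, hLL]
        ext x : 1; simp
      rw [hDL, sub_comp, smul_comp, h2, one_def, id_comp]
      push_cast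
      match_scalars
      field_simp
      ring
    have hDadj : adjoint DL = DL := by
      rw [← star_eq_adjoint]; exact (IsSelfAdjoint.of_nonneg hDL_pos).star_eq
    have key := one_sub_phi_mul_adjoint Lrow Arow DL T₁ s hLL hDadj hDL_sq hDLL hT₁
    rw [row_comp_adjoint _ _ _ _ _ _ hB hB, row_comp_adjoint _ _ _ _ _ _ hArow hArow] at key
    rw [← sub_nonneg, key]
    have h1 : 0 ≤ T₁ * (1 - (A₁ * adjoint A₁ + A₂ * adjoint A₂)) * adjoint T₁ := by
      rw [← star_eq_adjoint T₁]
      exact star_right_conjugate_nonneg (sub_nonneg.2 hcontr) T₁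
    rw [← Complex.ofReal_pow, Complex.coe_smul]
    exact smul_nonneg (sq_nonneg s) h1
end

section
/- (Identities (8)–(9) of Proposition 4.1.) Let A = (A₁, A₂) be a commuting 2-contraction on H and λ = (λ₁,λ₂) ∈ 𝔻², λ ≠ 0. Then 1_{H⊕H} − Φ_λ(A)*Φ_λ(A) = D_Λ(1_{H⊕H} − A*Λ)⁻¹(1_{H⊕H} − A*A)(1_{H⊕H} − Λ*A)⁻¹D_Λ, and 1_H − Φ_λ(A)Φ_λ(A)* = D_{Λ*}(1_H − AΛ*)⁻¹(1_H − AA*)(1_H − ΛA*)⁻¹D_{Λ*}. -/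
open ContinuousLinearMap Filter

/-! The defect identities of the ball automorphism `Φ = L - s T A D`, where `L`, `A` are the rows
`Λ`, `A`, `D = D_Λ`, `T = (1 - A L*)⁻¹`.

Two facts about `L` drive the computation: `L L* = (1 - s²) 1`, and the intertwining relation
`D L* = s L*`. The latter follows from `D² L* = L* (1 - L L*) = s² L*`, i.e.
`(D + s)(D L* - s L*) = 0`, since `D + s` is injective for `D ≥ 0` and `s > 0`.
After expanding `Φ* Φ` and `Φ Φ*`, the relation removes the mixed powers of `D`, and what is left
is algebra with the resolvents: `T A L* = T - 1` and its adjoint for `Φ Φ*`, and the push-through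
identity `T A = A S₂`, with `S₂ = (1 - L* A)⁻¹` and `L* A S₂ = S₂ - 1`, for `Φ* Φ`. -/

section Scalar

variable {H : Type*} [NormedAddCommGroup H] [InnerProductSpace ℂ H] [CompleteSpace H]

lemma adjoint_scalar_row (L : WithLp 2 (H × H) →L[ℂ] H) (a b : ℂ)
    (hL : ∀ x y : H, L ((WithLp.equiv 2 (H × H)).symm (x, y)) = a • x + b • y) (h : H) :
    adjoint L h = (WithLp.equiv 2 (H × H)).symm ((starRingEnd ℂ) a • h, (starRingEnd ℂ) b • h) := by
  refine ext_inner_right ℂ fun v => ?_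
  obtain ⟨⟨x, y⟩, rfl⟩ := (WithLp.equiv 2 (H × H)).symm.surjective v
  rw [adjoint_inner_left, hL]
  simp [WithLp.prod_inner_apply, inner_add_right, inner_smul_left, inner_smul_right]

lemma scalar_row_comp_adjoint (L : WithLp 2 (H × H) →L[ℂ] H) (a b : ℂ)
    (hL : ∀ x y : H, L ((WithLp.equiv 2 (H × H)).symm (x, y)) = a • x + b • y) :
    L ∘L adjoint L = ((‖a‖ ^ 2 + ‖b‖ ^ 2 : ℝ) : ℂ) • (1 : H →L[ℂ] H) := by
  ext h
  rw [comp_apply, adjoint_scalar_row L a b hL, hL, smul_smul, smul_smul, ← add_smul,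
    Complex.mul_conj', Complex.mul_conj']
  simp

end Scalar

section Defect

variable {E H : Type*} [NormedAddCommGroup E] [InnerProductSpace ℂ E] [CompleteSpace E]
  [NormedAddCommGroup H] [InnerProductSpace ℂ H] [CompleteSpace H]

/-- The defect operator `D` of a row `L` with `L L* = (1 - s²) 1` satisfies `D L* = s L*`. -/
lemma defect_comp_adjoint (L : E →L[ℂ] H) (D : E →L[ℂ] E) (s : ℝ) (hs : 0 < s) (hD : 0 ≤ D)
    (hDsq : D * D = 1 - adjoint L ∘L L)
    (hLL : L ∘L adjoint L = (1 - (s : ℂ) ^ 2) • (1 : H →L[ℂ] H)) :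
    D ∘L adjoint L = (s : ℂ) • adjoint L := by
  ext h
  have h1 : D (D (adjoint L h)) = (s : ℂ) ^ 2 • adjoint L h := by
    have e1 := congrArg (fun F : E →L[ℂ] E => F (adjoint L h)) hDsq
    have e2 := congrArg (fun F : H →L[ℂ] H => F h) hLL
    simp only [mul_def, sub_apply, one_def, id_apply, comp_apply, smul_apply] at e1 e2
    rw [e1, e2, map_smul, sub_smul, one_smul, sub_sub_cancel]
  set x : E := D (adjoint L h) - (s : ℂ) • adjoint L h with hx
  have hDx : D x = -((s : ℂ) • x) := by
    rw [hx, map_sub, map_smul, h1, smul_sub, smul_smul, pow_two]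
    abel
  have hpos : 0 ≤ RCLike.re (inner ℂ (D x) x) :=
    ((nonneg_iff_isPositive D).1 hD).re_inner_nonneg_left x
  have hval : RCLike.re (inner ℂ (D x) x) = -(s * ‖x‖ ^ 2) := by
    rw [hDx, inner_neg_left, inner_smul_left, inner_self_eq_norm_sq_to_K, Complex.conj_ofReal,
      map_neg]
    congr 1
    norm_cast
    exact Complex.re_ofReal_mul _ _
  have hx0 : x = 0 := by
    have : ‖x‖ ^ 2 ≤ 0 := by
      by_contra! hc
      nlinarith [mul_pos hs hc]
    simpa using this
  simpa [sub_eq_zero, hx] using hx0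

/-- The purely algebraic content of both identities: `A'`, `L'` stand for `A*`, `L*`, and the
factor `L' - s D A' T₂` for `Φ*`; positivity and adjoints play no role once the intertwining
relations `hDL` and `hLD` are given. -/
lemma defect_identities_algebra (A L : E →L[ℂ] H) (D S₁ S₂ : E →L[ℂ] E) (T₁ T₂ : H →L[ℂ] H)
    (A' L' : H →L[ℂ] E) (s : ℂ)
    (hLL : L ∘L L' = (1 - s ^ 2) • (1 : H →L[ℂ] H))
    (hDsq : D * D = 1 - L' ∘L L) (hDL : D ∘L L' = s • L') (hLD : L ∘L D = s • L)
    (hT₁ : T₁ * (1 - A ∘L L') = 1) (hT₂ : (1 - L ∘L A') * T₂ = 1)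
    (hS₁ : S₁ * (1 - A' ∘L L) = 1)
    (hS₂ : (1 - L' ∘L A) * S₂ = 1) :
    1 - (L' - s • (D ∘L A' ∘L T₂)) ∘L (L - s • (T₁ ∘L A ∘L D)) =
        D * S₁ * (1 - A' ∘L A) * S₂ * D ∧
      1 - (L - s • (T₁ ∘L A ∘L D)) ∘L (L' - s • (D ∘L A' ∘L T₂)) =
        s ^ 2 • (T₁ * (1 - A ∘L A') * T₂) := by
  -- Everything is evaluated at vectors, where compositions associate definitionally.
  have LL (h : H) : L (L' h) = h - s ^ 2 • h := by
    simpa [sub_smul] using congrArg (fun F : H →L[ℂ] H => F h) hLL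
  have DD (x : E) : D (D x) = x - L' (L x) := by
    simpa using congrArg (fun F : E →L[ℂ] E => F x) hDsq
  have DL (h : H) : D (L' h) = s • L' h := by
    simpa using congrArg (fun F : H →L[ℂ] E => F h) hDL
  have LD (x : E) : L (D x) = s • L x := by
    simpa using congrArg (fun F : E →L[ℂ] H => F x) hLD
  have t₁ (h : H) : T₁ (A (L' h)) = T₁ h - h := by
    have := congrArg (fun F : H →L[ℂ] H => F h) hT₁
    simp only [mul_def, sub_apply, one_def, id_apply, comp_apply, map_sub] at this
    exact eq_sub_of_add_eq (sub_eq_iff_eq_add'.1 this).symm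
  have t₂ (h : H) : L (A' (T₂ h)) = T₂ h - h := by
    have := congrArg (fun F : H →L[ℂ] H => F h) hT₂
    simp only [mul_def, sub_apply, one_def, id_apply, comp_apply] at this
    exact eq_sub_of_add_eq (sub_eq_iff_eq_add'.1 this).symm
  have s₁ (x : E) : S₁ (A' (L x)) = S₁ x - x := by
    have := congrArg (fun F : E →L[ℂ] E => F x) hS₁
    simp only [mul_def, sub_apply, one_def, id_apply, comp_apply, map_sub] at this
    exact eq_sub_of_add_eq (sub_eq_iff_eq_add'.1 this).symm
  have s₂ (x : E) : L' (A (S₂ x)) = S₂ x - x := by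
    have := congrArg (fun F : E →L[ℂ] E => F x) hS₂
    simp only [mul_def, sub_apply, one_def, id_apply, comp_apply] at this
    exact eq_sub_of_add_eq (sub_eq_iff_eq_add'.1 this).symm
  -- The two push-through identities `T₁ A = A S₂` and `A' T₂ = S₁ A'`.
  have p₁ (x : E) : T₁ (A x) = A (S₂ x) := by
    have h := t₁ (A (S₂ x))
    rw [s₂, map_sub, map_sub] at h
    exact sub_right_injective h
  have p₂ (h : H) : A' (T₂ h) = S₁ (A' h) := by
    have e := s₁ (A' (T₂ h))
    rw [t₂, map_sub, map_sub] at e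
    exact (sub_right_injective e).symm
  constructor
  · ext x
    -- `(S₁ - 1)(S₂ - 1) = (1 - s²) S₁ A' A S₂`, evaluated at `D x`
    have key : S₁ (A' (A (S₂ (D x)))) - s ^ 2 • S₁ (A' (A (S₂ (D x)))) =
        S₁ (S₂ (D x)) - S₁ (D x) - (S₂ (D x) - D x) := by
      have e := s₁ (L' (A (S₂ (D x))))
      rw [LL, s₂] at e
      simpa only [map_sub, map_smul] using e
    have hx : x - L' (L x) = D (D x) := (DD x).symm
    have e1 : s • L' (A (S₂ (D x))) = D (S₂ (D x)) - D (D x) := by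
      rw [← DL, s₂, map_sub]
    have e2 : s • D (S₁ (A' (L x))) = D (S₁ (D x)) - D (D x) := by
      rw [← map_sub, ← s₁, LD]; simp only [map_smul]
    have key' := congrArg D key
    simp only [map_sub, map_smul] at key'
    simp only [mul_def, sub_apply, one_def, id_apply, comp_apply, smul_apply, map_sub, map_smul, p₁, p₂,
      smul_sub, smul_smul, e1, e2, ← pow_two]
    linear_combination (norm := module) hx + key'
  · ext h
    have e1 : T₁ (A (D (L' h))) = s • (T₁ h - h) := by
      rw [DL, map_smul, map_smul, t₁]
    have e2 : L (D (A' (T₂ h))) = s • (T₂ h - h) := by rw [LD, t₂]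
    have e3 : T₁ (A (D (D (A' (T₂ h))))) = T₁ (A (A' (T₂ h))) - (T₁ (T₂ h) - T₂ h - (T₁ h - h)) := by
      rw [DD, t₂, map_sub, map_sub, t₁, map_sub]; abel_nf
    simp only [mul_def, sub_apply, one_def, id_apply, comp_apply, smul_apply, map_sub, map_smul,
      LL, e1, e2, e3]
    module

end Defect

theorem defect_identities
    {H : Type*} [NormedAddCommGroup H] [InnerProductSpace ℂ H] [CompleteSpace H]
    (A₁ A₂ : H →L[ℂ] H)
    (hcomm : A₁ * A₂ = A₂ * A₁)
    (hcontr : A₁ * adjoint A₁ + A₂ * adjoint A₂ ≤ 1)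
    (Arow : WithLp 2 (H × H) →L[ℂ] H)
    (hArow : ∀ x y : H, Arow ((WithLp.equiv 2 (H × H)).symm (x, y)) = A₁ x + A₂ y)
    (μ₁ μ₂ : ℂ) (hμ : ‖μ₁‖ ^ 2 + ‖μ₂‖ ^ 2 < 1) (hμ0 : (μ₁, μ₂) ≠ ((0 : ℂ), (0 : ℂ)))
    (s : ℝ) (hs : s = Real.sqrt (1 - ‖μ₁‖ ^ 2 - ‖μ₂‖ ^ 2))
    (Lrow : WithLp 2 (H × H) →L[ℂ] H)
    (hLrow : ∀ x y : H, Lrow ((WithLp.equiv 2 (H × H)).symm (x, y)) = μ₁ • x + μ₂ • y)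
    (DL : WithLp 2 (H × H) →L[ℂ] WithLp 2 (H × H)) (hDL_pos : 0 ≤ DL)
    (hDL_sq : DL * DL = 1 - (adjoint Lrow) ∘L Lrow)
    (T₁ : H →L[ℂ] H) (hT₁ : T₁ * (1 - Arow ∘L adjoint Lrow) = 1)
    (hT₁' : (1 - Arow ∘L adjoint Lrow) * T₁ = 1)
    (T₂ : H →L[ℂ] H) (hT₂ : T₂ * (1 - Lrow ∘L adjoint Arow) = 1)
    (hT₂' : (1 - Lrow ∘L adjoint Arow) * T₂ = 1)
    (S₁ : WithLp 2 (H × H) →L[ℂ] WithLp 2 (H × H))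
    (hS₁ : S₁ * (1 - (adjoint Arow) ∘L Lrow) = 1) (hS₁' : (1 - (adjoint Arow) ∘L Lrow) * S₁ = 1)
    (S₂ : WithLp 2 (H × H) →L[ℂ] WithLp 2 (H × H))
    (hS₂ : S₂ * (1 - (adjoint Lrow) ∘L Arow) = 1) (hS₂' : (1 - (adjoint Lrow) ∘L Arow) * S₂ = 1)
    (Phi : WithLp 2 (H × H) →L[ℂ] H)
    (hPhi : Phi = (Lrow - (s : ℂ) • (T₁ ∘L Arow ∘L DL))) :
    1 - (adjoint Phi) ∘L Phi = DL * S₁ * (1 - (adjoint Arow) ∘L Arow) * S₂ * DL ∧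
      1 - Phi ∘L (adjoint Phi) =
        ((s : ℂ) • (1 : H →L[ℂ] H)) * T₁ * (1 - Arow ∘L adjoint Arow) * T₂ *
          ((s : ℂ) • (1 : H →L[ℂ] H)) := by
  have hpos : 0 < 1 - ‖μ₁‖ ^ 2 - ‖μ₂‖ ^ 2 := by linarith
  have hs0 : 0 < s := hs ▸ Real.sqrt_pos.2 hpos
  have hs2 : s ^ 2 = 1 - ‖μ₁‖ ^ 2 - ‖μ₂‖ ^ 2 := hs ▸ Real.sq_sqrt hpos.le
  have hLL : Lrow ∘L adjoint Lrow = (1 - (s : ℂ) ^ 2) • (1 : H →L[ℂ] H) := by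
    rw [scalar_row_comp_adjoint Lrow μ₁ μ₂ hLrow]
    congr 1
    rw [← Complex.ofReal_pow, hs2]
    push_cast
    ring
  have hDadj : adjoint DL = DL := (((nonneg_iff_isPositive DL).1 hDL_pos).isSelfAdjoint).adjoint_eq
  have hDL := defect_comp_adjoint Lrow DL s hs0 hDL_pos hDL_sq hLL
  have hLD : Lrow ∘L DL = (s : ℂ) • Lrow := by
    have h := congrArg adjoint hDL
    rwa [adjoint_comp, hDadj, map_smulₛₗ, adjoint_adjoint, Complex.conj_ofReal] at h
  -- `T₁*` is a left inverse of `1 - L A*`, whose right inverse is `T₂`.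
  have hTadj : adjoint T₁ = T₂ := by
    have h := congrArg adjoint hT₁'
    simp only [mul_def, adjoint_comp, map_sub, adjoint_adjoint, one_def, adjoint_id] at h
    exact left_inv_eq_right_inv h hT₂'
  have hPhi' : adjoint Phi = adjoint Lrow - (s : ℂ) • (DL ∘L adjoint Arow ∘L T₂) := by
    rw [hPhi, map_sub, map_smulₛₗ, adjoint_comp, adjoint_comp, hDadj, hTadj, Complex.conj_ofReal,
      comp_assoc]
  obtain ⟨h1, h2⟩ := defect_identities_algebra Arow Lrow DL S₁ S₂ T₁ T₂ (adjoint Arow)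
    (adjoint Lrow) (s : ℂ) hLL hDL_sq hDL hLD hT₁ hT₂' hS₁ hS₂'
  rw [hPhi', hPhi]
  refine ⟨h1, h2.trans ?_⟩
  simp only [smul_mul_assoc, mul_smul_comm, one_mul, mul_one, smul_smul, pow_two]
end

section
/- (Formula (13), corrected with the normalizing factor.) Let A = (A₁, A₂) be a commuting 2-contraction on H, λ = (λ₁,λ₂) ∈ 𝔻², λ ≠ 0, and s = √(1 − |λ₁|² − |λ₂|²). Then the components of Φ_λ(A) are B₁(λ) = λ₁·1_H − (s/(|λ₁|² + |λ₂|²))·(1_H − λ̄₁A₁ − λ̄₂A₂)⁻¹·( A₁(|λ₂|² + |λ₁|²s) + λ₁λ̄₂A₂(s − 1) ) and B₂(λ) = λ₂·1_H − (s/(|λ₁|² + |λ₂|²))·(1_H − λ̄₁A₁ − λ̄₂A₂)⁻¹·( λ̄₁λ₂A₁(s − 1) + A₂(|λ₁|² + |λ₂|²s) ). -/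
/-!
Put `P = Λ*Λ` and `n = |μ₁|² + |μ₂|²`. Since `ΛΛ* = n`, the operator `P / n` is a projection, so the
positive square root of `1 - P` is the affine function `1 - ((1 - s) / n) P` of `P`, where
`s² = 1 - n` (`defect_eq`, by uniqueness of positive square roots). Applying this to the vectors
`(x, 0)` and `(0, y)`, with `Λ* z = (μ̄₁ z, μ̄₂ z)` (`adjoint_row`), gives the two components.
-/

open ContinuousLinearMap Filter

/-- If `P = P*` and `P² = n P`, then `P / n` is a projection, and the positive square root of `1 - P`
is `1` on its kernel and `s = √(1 - n)` on its range. -/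
lemma defect_eq_s15 {K : Type*} [NormedAddCommGroup K] [InnerProductSpace ℂ K] [CompleteSpace K]
    (P D : K →L[ℂ] K) (n s : ℝ) (hn : 0 < n) (hs : 0 ≤ s) (hsn : s ^ 2 = 1 - n)
    (hP : IsSelfAdjoint P) (hPP : P * P = (n : ℂ) • P) (hD : 0 ≤ D) (hDD : D * D = 1 - P) :
    D = 1 - (((1 - s) / n : ℝ) : ℂ) • P := by
  have hn' : (n : ℂ) ≠ 0 := by exact_mod_cast hn.ne'
  have hsn' : (s : ℂ) ^ 2 = 1 - n := by exact_mod_cast hsn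
  set E : K →L[ℂ] K := 1 - (((1 - s) / n : ℝ) : ℂ) • P with hE
  -- `F` is the square root of `E`; its existence shows that `E` is positive.
  set r : ℝ := √s with hr
  have hrr : (r : ℂ) ^ 2 = s := by exact_mod_cast Real.sq_sqrt hs
  set F : K →L[ℂ] K := 1 - (((1 - r) / n : ℝ) : ℂ) • P with hF
  have hmul : ∀ a b : ℂ, (1 - a • P) * (1 - b • P) = 1 - (a + b - a * b * n) • P := by
    intro a b
    simp only [mul_sub, sub_mul, mul_one, one_mul, smul_mul_assoc, mul_smul_comm, hPP]
    module
  have hFsa : IsSelfAdjoint F := by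
    refine (IsSelfAdjoint.one _).sub (IsSelfAdjoint.smul ?_ hP)
    simp [isSelfAdjoint_iff]
  have hFF : star F * F = E := by
    rw [hFsa.star_eq, hF, hmul, hE]
    congr 2
    push_cast
    field_simp
    linear_combination -hrr
  have hEpos : 0 ≤ E := hFF ▸ star_mul_self_nonneg F
  have hEE : E * E = 1 - P := by
    rw [hE, hmul]
    have : (((1 - s) / n : ℝ) : ℂ) + (((1 - s) / n : ℝ) : ℂ)
        - (((1 - s) / n : ℝ) : ℂ) * (((1 - s) / n : ℝ) : ℂ) * n = 1 := by
      push_cast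
      field_simp
      linear_combination -hsn'
    rw [this, one_smul]
  rw [← CFC.sqrt_unique hDD hD, ← CFC.sqrt_unique hEE hEpos]

lemma adjoint_row {H : Type*} [NormedAddCommGroup H] [InnerProductSpace ℂ H] [CompleteSpace H]
    (μ₁ μ₂ : ℂ) (L : WithLp 2 (H × H) →L[ℂ] H)
    (hL : ∀ x y : H, L ((WithLp.equiv 2 (H × H)).symm (x, y)) = μ₁ • x + μ₂ • y) (z : H) :
    adjoint L z = (WithLp.equiv 2 (H × H)).symm
      ((starRingEnd ℂ μ₁) • z, (starRingEnd ℂ μ₂) • z) := by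
  refine ext_inner_right ℂ fun v => ?_
  obtain ⟨⟨x, y⟩, rfl⟩ := (WithLp.equiv 2 (H × H)).symm.surjective v
  rw [adjoint_inner_left, hL]
  simp [WithLp.prod_inner_apply, inner_add_right, inner_smul_left, inner_smul_right]

theorem phi_components_formula
    {H : Type*} [NormedAddCommGroup H] [InnerProductSpace ℂ H] [CompleteSpace H]
    (A₁ A₂ : H →L[ℂ] H)
    (hcomm : A₁ * A₂ = A₂ * A₁)
    (hcontr : A₁ * adjoint A₁ + A₂ * adjoint A₂ ≤ 1)
    (Arow : WithLp 2 (H × H) →L[ℂ] H)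
    (hArow : ∀ x y : H, Arow ((WithLp.equiv 2 (H × H)).symm (x, y)) = A₁ x + A₂ y)
    (μ₁ μ₂ : ℂ) (hμ : ‖μ₁‖ ^ 2 + ‖μ₂‖ ^ 2 < 1) (hμ0 : (μ₁, μ₂) ≠ ((0 : ℂ), (0 : ℂ)))
    (s : ℝ) (hs : s = Real.sqrt (1 - ‖μ₁‖ ^ 2 - ‖μ₂‖ ^ 2))
    (Lrow : WithLp 2 (H × H) →L[ℂ] H)
    (hLrow : ∀ x y : H, Lrow ((WithLp.equiv 2 (H × H)).symm (x, y)) = μ₁ • x + μ₂ • y)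
    (DL : WithLp 2 (H × H) →L[ℂ] WithLp 2 (H × H)) (hDL_pos : 0 ≤ DL)
    (hDL_sq : DL * DL = 1 - (adjoint Lrow) ∘L Lrow)
    (T₁ : H →L[ℂ] H) (hT₁ : T₁ * (1 - Arow ∘L adjoint Lrow) = 1)
    (hT₁' : (1 - Arow ∘L adjoint Lrow) * T₁ = 1)
    (B₁ B₂ : H →L[ℂ] H)
    (hB : ∀ x y : H, (Lrow - (s : ℂ) • (T₁ ∘L Arow ∘L DL)) ((WithLp.equiv 2 (H × H)).symm (x, y)) = B₁ x + B₂ y)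
    (n : ℂ) (hn : n = ((‖μ₁‖ ^ 2 + ‖μ₂‖ ^ 2 : ℝ) : ℂ)) :
    B₁ = μ₁ • 1 - ((s : ℂ) / n) •
        (T₁ * ((((‖μ₂‖ ^ 2 + ‖μ₁‖ ^ 2 * s : ℝ) : ℂ)) • A₁ +
          (μ₁ * (starRingEnd ℂ μ₂) * ((s : ℂ) - 1)) • A₂)) ∧
      B₂ = μ₂ • 1 - ((s : ℂ) / n) •
        (T₁ * (((starRingEnd ℂ μ₁) * μ₂ * ((s : ℂ) - 1)) • A₁ +
          (((‖μ₁‖ ^ 2 + ‖μ₂‖ ^ 2 * s : ℝ) : ℂ)) • A₂)) := by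
  have hnpos : 0 < ‖μ₁‖ ^ 2 + ‖μ₂‖ ^ 2 := by
    by_contra h
    have h1 : ‖μ₁‖ = 0 := by nlinarith [sq_nonneg ‖μ₁‖, sq_nonneg ‖μ₂‖]
    have h2 : ‖μ₂‖ = 0 := by nlinarith [sq_nonneg ‖μ₁‖, sq_nonneg ‖μ₂‖]
    exact hμ0 (by rw [norm_eq_zero.mp h1, norm_eq_zero.mp h2])
  have hn0 : n ≠ 0 := by rw [hn]; exact_mod_cast hnpos.ne'
  have hs0 : 0 ≤ s := hs ▸ Real.sqrt_nonneg _
  have hs2 : s ^ 2 = 1 - (‖μ₁‖ ^ 2 + ‖μ₂‖ ^ 2) := by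
    rw [hs, Real.sq_sqrt (by linarith)]; ring
  have hm1 : μ₁ * starRingEnd ℂ μ₁ = (‖μ₁‖ : ℂ) ^ 2 := Complex.mul_conj' μ₁
  have hm2 : μ₂ * starRingEnd ℂ μ₂ = (‖μ₂‖ : ℂ) ^ 2 := Complex.mul_conj' μ₂
  have hn1 : n = (‖μ₁‖ : ℂ) ^ 2 + (‖μ₂‖ : ℂ) ^ 2 := by rw [hn]; push_cast; rfl
  have hadj := adjoint_row μ₁ μ₂ Lrow hLrow
  have hLL : ∀ z, Lrow (adjoint Lrow z) = n • z := by
    intro z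
    rw [hadj, hLrow, smul_smul, smul_smul, ← add_smul, hm1, hm2, hn1]
  have hPP : (adjoint Lrow ∘L Lrow) * (adjoint Lrow ∘L Lrow)
      = ((‖μ₁‖ ^ 2 + ‖μ₂‖ ^ 2 : ℝ) : ℂ) • (adjoint Lrow ∘L Lrow) := by
    ext1 v
    rw [← hn]
    simp [hLL]
  have hPsa : IsSelfAdjoint (adjoint Lrow ∘L Lrow) := by
    rw [isSelfAdjoint_iff, star_eq_adjoint, adjoint_comp, adjoint_adjoint]
  have hD := defect_eq_s15 _ DL _ s hnpos hs0 hs2 hPsa hPP hDL_pos hDL_sq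
  have key : ∀ x y : H, B₁ x + B₂ y = (μ₁ • x + μ₂ • y) - (s : ℂ) • T₁ ((A₁ x + A₂ y)
      - ((1 - s) / n) • (A₁ ((starRingEnd ℂ μ₁) • (μ₁ • x + μ₂ • y))
        + A₂ ((starRingEnd ℂ μ₂) • (μ₁ • x + μ₂ • y)))) := by
    intro x y
    rw [← hB, hD, Complex.ofReal_div, ← hn]
    simp only [sub_apply, smul_apply, comp_apply, one_apply_eq_self, map_sub, map_smul, hLrow, hadj,
      hArow, Complex.ofReal_sub, Complex.ofReal_one]
  constructor
  · ext x
    have h := key x 0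
    simp only [map_zero, add_zero, smul_zero, map_smul, map_sub, map_add] at h
    rw [h]
    simp only [sub_apply, smul_apply, add_apply, mul_apply_eq_comp, one_apply_eq_self, map_smul, map_add]
    match_scalars
    · ring
    · push_cast
      field_simp
      linear_combination (-(s : ℂ)) * hn1 + (s * (1 - s) : ℂ) * hm1
    · field_simp
      ring
  · ext y
    have h := key 0 y
    simp only [map_zero, zero_add, smul_zero, map_smul, map_sub, map_add] at h
    rw [h]
    simp only [sub_apply, smul_apply, add_apply, mul_apply_eq_comp, one_apply_eq_self, map_smul, map_add]
    match_scalars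
    · ring
    · push_cast
      field_simp
      linear_combination (-(s : ℂ)) * hn1 + (s * (1 - s) : ℂ) * hm2
    · field_simp
      ring
end

section
/- Let A = (A₁, A₂) be a pure commuting 2-contraction on H with D_{A*} injective, let λ = (λ₁,λ₂) ∈ 𝔻², λ ≠ 0, and assume the pair (B₁(λ),B₂(λ)) is also pure. Let (z₁,z₂) ∈ 𝔻². Then Φ_λ(z₁,z₂) ∈ σ_T^{(1)}(B₁(λ),B₂(λ)) if and only if there exists y ≠ 0 in H such that θ_A(z₁,z₂)(D_A((1_{H⊕H} − Λ*A)⁻¹(D_Λ(y,0)))) = 0 and θ_A(z₁,z₂)(D_A((1_{H⊕H} − Λ*A)⁻¹(D_Λ(0,y)))) = 0. -/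
/-!
Two operator identities give the equivalence, and the same vector serves on both sides.

* Writing `A`, `Z`, `Λ` for the rows `Arow`, `Zrow`, `Lrow`, the intertwining relation
  `A D_A = D_{A*} A` (`row_intertwine`) and `R (1 - Z A*) = 1` give
  `θ_A(z) D_A = D_{A*} R (Z - A)`. Since `D_{A*}` and `R` are injective, `θ_A(z) D_A v = 0` exactly
  when `(Z - A) v = 0`.
* The defect operator of the scalar row is explicit, `D_Λ = 1 - ((1 - s)/‖λ‖²) Λ*Λ`
  (`defect_scalar_row`), so `(w₁, w₂) = Φ_λ(z)` is the row `W = Λ - (s/(1 - ⟨z,λ⟩)) Z D_Λ`. From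
  `Z Λ* = ⟨z,λ⟩` and `(1 - AΛ*)⁻¹ A = A (1 - Λ*A)⁻¹` one gets
  `Φ_λ(A) - W = (s/(1 - ⟨z,λ⟩)) (Z - A) (1 - Λ*A)⁻¹ D_Λ`, with a nonzero scalar factor.

Evaluating the second identity at `(x, 0)` and `(0, x)` turns the eigenvector equations into
`(Z - A) (1 - Λ*A)⁻¹ D_Λ (x, 0) = 0` and `(Z - A) (1 - Λ*A)⁻¹ D_Λ (0, x) = 0`, which by the first
identity are the equations for `θ_A(z)`.
-/

open ContinuousLinearMap Filter

section helpers

variable {H : Type*} [NormedAddCommGroup H] [InnerProductSpace ℂ H] [CompleteSpace H]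

/-- The adjoint of a row operator is the column of the adjoints. -/
lemma adjoint_row_s16 (A₁ A₂ : H →L[ℂ] H) (Arow : WithLp 2 (H × H) →L[ℂ] H)
    (hArow : ∀ x y : H, Arow ((WithLp.equiv 2 (H × H)).symm (x, y)) = A₁ x + A₂ y) (h : H) :
    adjoint Arow h = (WithLp.equiv 2 (H × H)).symm (adjoint A₁ h, adjoint A₂ h) := by
  refine ext_inner_right ℂ fun v => ?_
  have hv : v = (WithLp.equiv 2 (H × H)).symm (v.fst, v.snd) := rfl
  rw [adjoint_inner_left, hv, hArow, inner_add_right]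
  simp [WithLp.prod_inner_apply, adjoint_inner_left]

/-- A row composed with the adjoint of another row. -/
lemma row_adjoint_row (A₁ A₂ C₁ C₂ : H →L[ℂ] H) (Arow Crow : WithLp 2 (H × H) →L[ℂ] H)
    (hArow : ∀ x y : H, Arow ((WithLp.equiv 2 (H × H)).symm (x, y)) = A₁ x + A₂ y)
    (hCrow : ∀ x y : H, Crow ((WithLp.equiv 2 (H × H)).symm (x, y)) = C₁ x + C₂ y) :
    Crow ∘L adjoint Arow = C₁ * adjoint A₁ + C₂ * adjoint A₂ := by
  ext h
  rw [comp_apply, adjoint_row_s16 A₁ A₂ Arow hArow, hCrow]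
  rfl

/-- A Sylvester-type uniqueness statement: if `a, b ≥ 0`, `a` is injective and `a K + K b = 0`, then
`K = 0`. Indeed `a K K* = -K b K*` is self-adjoint, so `a` and `K K*` commute and `a K K* ≥ 0`, while
`-K b K* ≤ 0`. -/
lemma eq_zero_of_sylvester {E : Type*} [NormedAddCommGroup E] [InnerProductSpace ℂ E]
    [CompleteSpace E] (a : H →L[ℂ] H) (b : E →L[ℂ] E) (K : E →L[ℂ] H) (ha : 0 ≤ a) (hb : 0 ≤ b)
    (hinj : Function.Injective a) (hK : a ∘L K + K ∘L b = 0) : K = 0 := by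
  have hbp : b.IsPositive := (nonneg_iff_isPositive b).1 hb
  have hKK : 0 ≤ K ∘L adjoint K := (nonneg_iff_isPositive _).2 (isPositive_self_comp_adjoint K)
  have hM : 0 ≤ K ∘L b ∘L adjoint K := (nonneg_iff_isPositive _).2 (hbp.conj_adjoint K)
  have hrel : a * (K ∘L adjoint K) = -(K ∘L b ∘L adjoint K) := by
    ext x
    have := congrArg (fun T => T (adjoint K x)) hK
    simpa using eq_neg_of_add_eq_zero_left this
  have hcom : Commute a (K ∘L adjoint K) := by
    have h1 : IsSelfAdjoint (a * (K ∘L adjoint K)) := by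
      rw [hrel]; exact (IsSelfAdjoint.of_nonneg hM).neg
    exact ((IsSelfAdjoint.of_nonneg ha).commute_iff (IsSelfAdjoint.of_nonneg hKK)).2 h1
  have hge : 0 ≤ a * (K ∘L adjoint K) := hcom.mul_nonneg ha hKK
  have hzero : a * (K ∘L adjoint K) = 0 :=
    le_antisymm (by rw [hrel]; exact neg_nonpos.2 hM) hge
  have hz : ∀ x, adjoint K x = 0 := fun x => by
    have h1 : K (adjoint K x) = 0 := hinj (by
      simpa using congrArg (fun T => T x) hzero)
    have h2 : inner ℂ (adjoint K x) (adjoint K x) = 0 := by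
      rw [adjoint_inner_left, h1, inner_zero_right]
    exact inner_self_eq_zero.1 h2
  have : adjoint K = 0 := by ext x; simp [hz x]
  simpa using congrArg adjoint this

/-- The intertwining relation `A D_A = D_{A*} A`, when `D_{A*}` is injective: the difference `K`
satisfies `D_{A*} K + K D_A = D_{A*}² A - A D_A² = 0`. -/
lemma row_intertwine {E : Type*} [NormedAddCommGroup E] [InnerProductSpace ℂ E] [CompleteSpace E]
    (A : E →L[ℂ] H) (a : H →L[ℂ] H) (b : E →L[ℂ] E) (ha : 0 ≤ a) (hb : 0 ≤ b)
    (hinj : Function.Injective a) (ha2 : a * a = 1 - A ∘L adjoint A)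
    (hb2 : b * b = 1 - adjoint A ∘L A) : A ∘L b = a ∘L A := by
  have h := eq_zero_of_sylvester a b (a ∘L A - A ∘L b) ha hb hinj (by
    ext x
    have h1 := congrArg (fun T => T (A x)) ha2
    have h2 := congrArg (fun T => A (T x)) hb2
    simp at h1 h2
    simp [h1, h2])
  exact (sub_eq_zero.1 h).symm

/-- If the self-adjoint `Q` satisfies `Q² = m Q` with `m ≠ 0` (so that `Q/m` is a projection), the positive
square root of `1 - Q` is `1 - ((1 - s)/m) Q`, where `s = √(1 - m)`. -/
lemma defect_scalar_row {E : Type*} [NormedAddCommGroup E] [InnerProductSpace ℂ E]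
    [CompleteSpace E] (Q D : E →L[ℂ] E) (hQ : IsSelfAdjoint Q) (m s : ℝ) (hm : m ≠ 0)
    (hs0 : 0 ≤ s) (hs : s ^ 2 = 1 - m) (hQ2 : Q * Q = (m : ℂ) • Q) (hD : 0 ≤ D)
    (hD2 : D * D = 1 - Q) : D = 1 - (((1 - s) / m : ℝ) : ℂ) • Q := by
  have hsq : ∀ d : ℝ, (1 - (d : ℂ) • Q) * (1 - (d : ℂ) • Q) =
      1 - ((2 * d - d ^ 2 * m : ℝ) : ℂ) • Q := fun d => by
    simp only [mul_sub, sub_mul, mul_one, one_mul, smul_mul_smul_comm, hQ2, smul_smul]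
    push_cast
    module
  -- Nonnegativity: `1 - ((1 - s)/m) Q` is the square of the self-adjoint `1 - ((1 - √s)/m) Q`.
  have hpos : 0 ≤ 1 - (((1 - s) / m : ℝ) : ℂ) • Q := by
    have hr := Real.sq_sqrt hs0
    have h1 := hsq ((1 - Real.sqrt s) / m)
    have h2 : 2 * ((1 - Real.sqrt s) / m) - ((1 - Real.sqrt s) / m) ^ 2 * m = (1 - s) / m := by
      field_simp
      linear_combination -hr
    rw [h2] at h1
    rw [← h1]
    refine IsSelfAdjoint.mul_self_nonneg ?_
    refine (IsSelfAdjoint.one _).sub (IsSelfAdjoint.smul ?_ hQ)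
    exact Complex.conj_ofReal _
  have hC2 : (1 - (((1 - s) / m : ℝ) : ℂ) • Q) * (1 - (((1 - s) / m : ℝ) : ℂ) • Q) = 1 - Q := by
    rw [hsq]
    have h2 : 2 * ((1 - s) / m) - ((1 - s) / m) ^ 2 * m = 1 := by
      field_simp
      linear_combination -hs
    rw [h2]; simp
  rw [← CFC.sqrt_unique hD2 hD, ← CFC.sqrt_unique hC2 hpos]

end helpers

theorem sigma_one_phi_char
    {H : Type*} [NormedAddCommGroup H] [InnerProductSpace ℂ H] [CompleteSpace H]
    (A₁ A₂ : H →L[ℂ] H)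
    (hcomm : A₁ * A₂ = A₂ * A₁)
    (hcontr : A₁ * adjoint A₁ + A₂ * adjoint A₂ ≤ 1)
    (hpure : ∀ x : H, Tendsto (fun n => ((A₁ * adjoint A₁ + A₂ * adjoint A₂) ^ n) x) atTop (nhds 0))
    (Dstar : H →L[ℂ] H) (hDstar_pos : 0 ≤ Dstar)
    (hDstar_sq : Dstar * Dstar = 1 - A₁ * adjoint A₁ - A₂ * adjoint A₂)
    (hDstar_inj : Function.Injective ⇑Dstar)
    (Arow : WithLp 2 (H × H) →L[ℂ] H)
    (hArow : ∀ x y : H, Arow ((WithLp.equiv 2 (H × H)).symm (x, y)) = A₁ x + A₂ y)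
    (DA : WithLp 2 (H × H) →L[ℂ] WithLp 2 (H × H)) (hDA_pos : 0 ≤ DA)
    (hDA_sq : DA * DA = 1 - (adjoint Arow) ∘L Arow)
    (μ₁ μ₂ : ℂ) (hμ : ‖μ₁‖ ^ 2 + ‖μ₂‖ ^ 2 < 1) (hμ0 : (μ₁, μ₂) ≠ ((0 : ℂ), (0 : ℂ)))
    (s : ℝ) (hs : s = Real.sqrt (1 - ‖μ₁‖ ^ 2 - ‖μ₂‖ ^ 2))
    (Lrow : WithLp 2 (H × H) →L[ℂ] H)
    (hLrow : ∀ x y : H, Lrow ((WithLp.equiv 2 (H × H)).symm (x, y)) = μ₁ • x + μ₂ • y)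
    (DL : WithLp 2 (H × H) →L[ℂ] WithLp 2 (H × H)) (hDL_pos : 0 ≤ DL)
    (hDL_sq : DL * DL = 1 - (adjoint Lrow) ∘L Lrow)
    (T₁ : H →L[ℂ] H) (hT₁ : T₁ * (1 - Arow ∘L adjoint Lrow) = 1)
    (hT₁' : (1 - Arow ∘L adjoint Lrow) * T₁ = 1)
    (S₂ : WithLp 2 (H × H) →L[ℂ] WithLp 2 (H × H))
    (hS₂ : S₂ * (1 - (adjoint Lrow) ∘L Arow) = 1) (hS₂' : (1 - (adjoint Lrow) ∘L Arow) * S₂ = 1)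
    (B₁ B₂ : H →L[ℂ] H)
    (hB : ∀ x y : H, (Lrow - (s : ℂ) • (T₁ ∘L Arow ∘L DL)) ((WithLp.equiv 2 (H × H)).symm (x, y)) = B₁ x + B₂ y)
    (hBpure : ∀ x : H, Tendsto (fun n => ((B₁ * adjoint B₁ + B₂ * adjoint B₂) ^ n) x) atTop (nhds 0))
    (z₁ z₂ : ℂ) (hz : ‖z₁‖ ^ 2 + ‖z₂‖ ^ 2 < 1)
    (R : H →L[ℂ] H) (hR₁ : R * (1 - z₁ • adjoint A₁ - z₂ • adjoint A₂) = 1)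
    (hR₂ : (1 - z₁ • adjoint A₁ - z₂ • adjoint A₂) * R = 1)
    (Zrow : WithLp 2 (H × H) →L[ℂ] H)
    (hZrow : ∀ x y : H, Zrow ((WithLp.equiv 2 (H × H)).symm (x, y)) = z₁ • x + z₂ • y)
    (ip : ℂ) (hip : ip = z₁ * (starRingEnd ℂ) μ₁ + z₂ * (starRingEnd ℂ) μ₂)
    (w₁ w₂ : ℂ)
    (hw₁ : w₁ = μ₁ - ((s : ℂ) / (1 - ip)) * (z₁ - (1 - (s : ℂ)) * (ip / ((‖μ₁‖ ^ 2 + ‖μ₂‖ ^ 2 : ℝ) : ℂ)) * μ₁))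
    (hw₂ : w₂ = μ₂ - ((s : ℂ) / (1 - ip)) * (z₂ - (1 - (s : ℂ)) * (ip / ((‖μ₁‖ ^ 2 + ‖μ₂‖ ^ 2 : ℝ) : ℂ)) * μ₂)) :
    (∃ x : H, x ≠ 0 ∧ B₁ x - w₁ • x = 0 ∧ B₂ x - w₂ • x = 0) ↔
      ∃ y : H, y ≠ 0 ∧
        (-Arow + Dstar ∘L R ∘L Zrow ∘L DA) (DA (S₂ (DL ((WithLp.equiv 2 (H × H)).symm (y, 0))))) = 0 ∧
        (-Arow + Dstar ∘L R ∘L Zrow ∘L DA) (DA (S₂ (DL ((WithLp.equiv 2 (H × H)).symm (0, y))))) = 0 := by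

  have hm0 : ‖μ₁‖ ^ 2 + ‖μ₂‖ ^ 2 ≠ 0 := by
    intro h
    apply hμ0
    have h1 : ‖μ₁‖ = 0 := by nlinarith [sq_nonneg ‖μ₁‖, sq_nonneg ‖μ₂‖]
    have h2 : ‖μ₂‖ = 0 := by nlinarith [sq_nonneg ‖μ₁‖, sq_nonneg ‖μ₂‖]
    rw [norm_eq_zero.1 h1, norm_eq_zero.1 h2]
  have hspos : 0 < s := by rw [hs]; exact Real.sqrt_pos.2 (by linarith)
  have hs2 : s ^ 2 = 1 - (‖μ₁‖ ^ 2 + ‖μ₂‖ ^ 2) := by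
    rw [hs, Real.sq_sqrt (by linarith)]; ring
  -- By AM–GM on each coordinate, `|⟨z,λ⟩| ≤ (‖z‖² + ‖λ‖²)/2 < 1`.
  have hip1 : (1 : ℂ) - ip ≠ 0 := by
    intro h
    have h1 : ip = 1 := (sub_eq_zero.1 h).symm
    have h2 : ‖ip‖ ≤ ‖z₁‖ * ‖μ₁‖ + ‖z₂‖ * ‖μ₂‖ := by
      rw [hip]
      refine (norm_add_le _ _).trans ?_
      simp
    rw [h1, norm_one] at h2
    nlinarith [sq_nonneg (‖z₁‖ - ‖μ₁‖), sq_nonneg (‖z₂‖ - ‖μ₂‖)]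
  have hAA := row_adjoint_row A₁ A₂ A₁ A₂ Arow Arow hArow hArow
  have hZA := row_adjoint_row A₁ A₂ (z₁ • 1) (z₂ • 1) Arow Zrow hArow (by simpa using hZrow)
  have hLL := row_adjoint_row (μ₁ • 1) (μ₂ • 1) (μ₁ • 1) (μ₂ • 1) Lrow Lrow
    (by simpa using hLrow) (by simpa using hLrow)
  have hZL := row_adjoint_row (μ₁ • 1) (μ₂ • 1) (z₁ • 1) (z₂ • 1) Lrow Zrow
    (by simpa using hLrow) (by simpa using hZrow)
  have hLLv : ∀ v, Lrow (adjoint Lrow v) = ((‖μ₁‖ ^ 2 + ‖μ₂‖ ^ 2 : ℝ) : ℂ) • v := fun v => by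
    have h := congrArg (fun T => T v) hLL
    simp only [← star_eq_adjoint, star_smul, star_one] at h
    change Lrow (adjoint Lrow v) = μ₁ • star μ₁ • v + μ₂ • star μ₂ • v at h
    rw [h, smul_smul, smul_smul, ← add_smul]
    congr 1
    simp [Complex.mul_conj, Complex.normSq_eq_norm_sq]
  have hZLv : ∀ v, Zrow (adjoint Lrow v) = ip • v := fun v => by
    have h := congrArg (fun T => T v) hZL
    simp only [← star_eq_adjoint, star_smul, star_one] at h
    change Zrow (adjoint Lrow v) = z₁ • star μ₁ • v + z₂ • star μ₂ • v at h
    rw [h, smul_smul, smul_smul, ← add_smul, hip]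
    rfl
  have hDL : DL = 1 - (((1 - s) / (‖μ₁‖ ^ 2 + ‖μ₂‖ ^ 2) : ℝ) : ℂ) • (adjoint Lrow ∘L Lrow) := by
    refine defect_scalar_row _ DL (isPositive_adjoint_comp_self Lrow).isSelfAdjoint _ s hm0
      hspos.le hs2 ?_ hDL_pos hDL_sq
    refine ContinuousLinearMap.ext fun v => ?_
    change adjoint Lrow (Lrow (adjoint Lrow (Lrow v))) =
      ((‖μ₁‖ ^ 2 + ‖μ₂‖ ^ 2 : ℝ) : ℂ) • adjoint Lrow (Lrow v)
    rw [hLLv, map_smul]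
  have hAD : Arow ∘L DA = Dstar ∘L Arow :=
    row_intertwine Arow Dstar DA hDstar_pos hDA_pos hDstar_inj
      (by rw [hDstar_sq, hAA, sub_sub]) hDA_sq
  have hRinj : ∀ v, R v = 0 → v = 0 := fun v hv => by
    have h := congrArg (fun T => T v) hR₂
    change (1 - z₁ • adjoint A₁ - z₂ • adjoint A₂) (R v) = v at h
    rw [← h, hv, map_zero]
  -- `θ_A(z) D_A = D_{A*} R (Z - A)`.
  have hθ : ∀ v, (-Arow + Dstar ∘L R ∘L Zrow ∘L DA) (DA v) = Dstar (R (Zrow v - Arow v)) := by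
    intro v
    have h1 : Arow (DA v) = Dstar (Arow v) := congrArg (fun T => T v) hAD
    have h2 : DA (DA v) = v - adjoint Arow (Arow v) := congrArg (fun T => T v) hDA_sq
    have h3 : Zrow (adjoint Arow (Arow v)) = z₁ • adjoint A₁ (Arow v) + z₂ • adjoint A₂ (Arow v) := by
      simpa using congrArg (fun T => T (Arow v)) hZA
    have h4 : R (Arow v - z₁ • adjoint A₁ (Arow v) - z₂ • adjoint A₂ (Arow v)) = Arow v :=
      congrArg (fun T => T (Arow v)) hR₁
    have h5 : Zrow v - Arow v = Zrow (DA (DA v)) -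
        (Arow v - z₁ • adjoint A₁ (Arow v) - z₂ • adjoint A₂ (Arow v)) := by
      rw [h2, map_sub, h3]; abel
    rw [h5, map_sub R, h4, map_sub Dstar]
    simp [h1]
    abel
  have hθ0 : ∀ v, (-Arow + Dstar ∘L R ∘L Zrow ∘L DA) (DA v) = 0 ↔ Zrow v - Arow v = 0 := by
    intro v
    rw [hθ]
    refine ⟨fun h => hRinj _ (hDstar_inj (by rw [h, map_zero])), fun h => by rw [h]; simp⟩
  -- `Φ_λ(A) - W = (s/(1 - ⟨z,λ⟩)) (Z - A) (1 - Λ*A)⁻¹ D_Λ`, with `W = Λ - (s/(1 - ⟨z,λ⟩)) Z D_Λ`.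
  have hΦ : ∀ v, (Lrow - (s : ℂ) • (T₁ ∘L Arow ∘L DL)) v -
      (Lrow v - ((s : ℂ) / (1 - ip)) • Zrow (DL v)) =
      ((s : ℂ) / (1 - ip)) • (Zrow (S₂ (DL v)) - Arow (S₂ (DL v))) := by
    intro v
    set u := S₂ (DL v) with hu
    have h1 : DL v = u - adjoint Lrow (Arow u) := by
      have h := congrArg (fun T => T (DL v)) hS₂'
      simpa using h.symm
    have h2 : T₁ (Arow (DL v)) = Arow u := by
      have h := congrArg (fun T => T (Arow u)) hT₁
      simp at h
      rw [h1, map_sub, map_sub]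
      exact h
    have h3 : Zrow (DL v) = Zrow u - ip • Arow u := by rw [h1, map_sub, hZLv]
    simp only [sub_apply, smul_apply, comp_apply, h2, h3]
    have h4 : (s : ℂ) = (s : ℂ) / (1 - ip) * (1 - ip) := by field_simp
    rw [show (s : ℂ) • Arow u = ((s : ℂ) / (1 - ip) * (1 - ip)) • Arow u by rw [← h4]]
    module
  have hZD : ∀ v, Lrow v - ((s : ℂ) / (1 - ip)) • Zrow (DL v) =
      Lrow v - ((s : ℂ) / (1 - ip)) • (Zrow v -
        ((1 - (s : ℂ)) * (ip / ((‖μ₁‖ ^ 2 + ‖μ₂‖ ^ 2 : ℝ) : ℂ))) • Lrow v) := by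
    intro v
    rw [hDL]
    simp only [sub_apply, smul_apply, comp_apply, map_sub, map_smul, hZLv, smul_smul]
    congr 4
    push_cast
    ring
  have hc : (s : ℂ) / (1 - ip) ≠ 0 :=
    div_ne_zero (by exact_mod_cast hspos.ne') hip1
  have key₁ : ∀ x, B₁ x - w₁ • x = 0 ↔
      (-Arow + Dstar ∘L R ∘L Zrow ∘L DA)
        (DA (S₂ (DL ((WithLp.equiv 2 (H × H)).symm (x, 0))))) = 0 := by
    intro x
    have h := hΦ ((WithLp.equiv 2 (H × H)).symm (x, 0))
    rw [hZD, hB, hLrow, hZrow] at h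
    rw [hθ0, ← smul_eq_zero_iff_right (m := Zrow _ - Arow _) hc, ← h, hw₁]
    simp only [map_zero, smul_zero, add_zero]
    refine Eq.congr_left ?_
    module
  have key₂ : ∀ x, B₂ x - w₂ • x = 0 ↔
      (-Arow + Dstar ∘L R ∘L Zrow ∘L DA)
        (DA (S₂ (DL ((WithLp.equiv 2 (H × H)).symm (0, x))))) = 0 := by
    intro x
    have h := hΦ ((WithLp.equiv 2 (H × H)).symm (0, x))
    rw [hZD, hB, hLrow, hZrow] at h
    rw [hθ0, ← smul_eq_zero_iff_right (m := Zrow _ - Arow _) hc, ← h, hw₂]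
    simp only [map_zero, smul_zero, zero_add]
    refine Eq.congr_left ?_
    module
  simp only [key₁, key₂]
end

section
/- (Corollary.) Let A = (A₁, A₂) be a pure commuting 2-contraction on H with D_{A*} injective, let λ = (λ₁,λ₂) ∈ 𝔻², λ ≠ 0, and assume the pair (B₁(λ),B₂(λ)) is also pure. Let (z₁,z₂) ∈ 𝔻². Then (z₁,z₂) ∈ σ_T^{(1)}(A₁,A₂) and Φ_λ(z₁,z₂) ∈ σ_T^{(1)}(B₁(λ),B₂(λ)) hold simultaneously if and only if there exist nonzero vectors x, y ∈ H such that the four vectors (x,0), (0,x), (1_{H⊕H} − Λ*A)⁻¹(D_Λ(y,0)) and (1_{H⊕H} − Λ*A)⁻¹(D_Λ(0,y)) are all solutions X of the equation θ_A(z₁,z₂)(D_A X) = 0. -/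
open ContinuousLinearMap Filter

/-!
Write `D_A` and `D_{A*}` for the defect operators of the row `A`. Since `A D_A = D_{A*} A`
(`intertwine`), the vector `θ_A(z) D_A X` equals `D_{A*} (1 - Z A*)⁻¹ (Z - A) X`. As `D_{A*}` is
injective, `θ_A(z) D_A X = 0` if and only if `A X = Z X` (`theta_zero_iff`). For `X = (x, 0), (0, x)`
this says that `x` is a joint eigenvector of `(A₁, A₂)` at `z`.

For the other two vectors, `D_Λ = 1 - (1 - s)/‖λ‖² Λ*Λ` (`defect_scalar`), so the row `W` of the
scalars `Φ_λ(z)` is `Λ - s (1 - ZΛ*)⁻¹ Z D_Λ`. Then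
`W - Φ_λ(A) = s (1 - ZΛ*)⁻¹ (A - Z)(1 - Λ*A)⁻¹ D_Λ` (`resolvent_identity`), where `ZΛ* = ⟨z, λ⟩ ≠ 1`
is a scalar. Hence `(1 - Λ*A)⁻¹ D_Λ (y, 0)` and `(1 - Λ*A)⁻¹ D_Λ (0, y)` both solve the equation
exactly when `y` is a joint eigenvector of `(B₁, B₂)` at `Φ_λ(z)`.
-/

section helpers

variable {H : Type*} [NormedAddCommGroup H] [InnerProductSpace ℂ H] [CompleteSpace H]

lemma row_adjoint {T₁ T₂ : H →L[ℂ] H} {T : WithLp 2 (H × H) →L[ℂ] H}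
    (hT : ∀ x y : H, T ((WithLp.equiv 2 (H × H)).symm (x, y)) = T₁ x + T₂ y) (h : H) :
    adjoint T h = (WithLp.equiv 2 (H × H)).symm (adjoint T₁ h, adjoint T₂ h) := by
  refine ext_inner_right ℂ fun v => ?_
  obtain ⟨⟨x, y⟩, rfl⟩ := (WithLp.equiv 2 (H × H)).symm.surjective v
  rw [adjoint_inner_left, hT]
  simp [WithLp.prod_inner_apply, adjoint_inner_left, inner_add_right]

/-- The intertwining `A D_A = D_{A*} A` of defect operators, for injective `D_{A*}`. The defect
`C = A F - D A` satisfies `D C = -C F`, so `D C C* = -C F C* ≤ 0`. Being self-adjoint, `D C C*` is a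
product of commuting positive operators, so it is also `≥ 0`; injectivity of `D` yields `C C* = 0`. -/
lemma intertwine {E : Type*} [NormedAddCommGroup E] [InnerProductSpace ℂ E] [CompleteSpace E]
    {A : E →L[ℂ] H} {D : H →L[ℂ] H} {F : E →L[ℂ] E} (hD : 0 ≤ D) (hF : 0 ≤ F)
    (hinj : Function.Injective ⇑D) (hsq : (D * D) ∘L A = A ∘L (F * F)) :
    A ∘L F = D ∘L A := by
  set C := A ∘L F - D ∘L A with hC
  have hDC : ∀ v, D (C v) = - C (F v) := by
    intro v
    have : D (D (A v)) = A (F (F v)) := congrArg (fun T : E →L[ℂ] H => T v) hsq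
    simp [hC, this]
  set N : H →L[ℂ] H := C ∘L adjoint C
  have hN : 0 ≤ N := by
    rw [nonneg_iff_isPositive]; exact isPositive_self_comp_adjoint C
  have hM : 0 ≤ C ∘L F ∘L adjoint C := by
    rw [nonneg_iff_isPositive] at hF ⊢; exact hF.conj_adjoint C
  have hDN : D * N = - (C ∘L F ∘L adjoint C) := by
    ext v; simp [N, hDC]
  have hcomm : Commute D N := by
    have h1 : IsSelfAdjoint (D * N) := by
      rw [hDN]; exact (IsSelfAdjoint.of_nonneg hM).neg
    exact ((IsSelfAdjoint.of_nonneg hD).commute_iff (IsSelfAdjoint.of_nonneg hN)).2 h1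
  have h0 : 0 ≤ D * N := hcomm.mul_nonneg hD hN
  have h1 : D * N = 0 := le_antisymm (by rw [hDN]; exact neg_nonpos.2 hM) h0
  have hN0 : ∀ v, N v = 0 := fun v => hinj (by simpa using congrArg (fun T : H →L[ℂ] H => T v) h1)
  have hC0 : ∀ v, adjoint C v = 0 := by
    intro v
    have : inner ℂ (N v) v = (0 : ℂ) := by simp [hN0]
    rw [show N v = C (adjoint C v) from rfl, ← adjoint_inner_right] at this
    exact inner_self_eq_zero.1 this
  have : adjoint C = 0 := by ext v; simp [hC0]
  have : C = 0 := by simpa using congrArg (fun T => adjoint T) this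
  exact sub_eq_zero.1 this

/-- The characteristic function, composed with the defect operator, has kernel `ker (Z - A)`. -/
lemma theta_zero_iff {A₁ A₂ Dstar R : H →L[ℂ] H} {z₁ z₂ : ℂ}
    {Arow Zrow : WithLp 2 (H × H) →L[ℂ] H} {DA : WithLp 2 (H × H) →L[ℂ] WithLp 2 (H × H)}
    (hDstar_pos : 0 ≤ Dstar)
    (hDstar_sq : Dstar * Dstar = 1 - A₁ * adjoint A₁ - A₂ * adjoint A₂)
    (hDstar_inj : Function.Injective ⇑Dstar)
    (hArow : ∀ x y : H, Arow ((WithLp.equiv 2 (H × H)).symm (x, y)) = A₁ x + A₂ y)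
    (hDA_pos : 0 ≤ DA) (hDA_sq : DA * DA = 1 - (adjoint Arow) ∘L Arow)
    (hR₁ : R * (1 - z₁ • adjoint A₁ - z₂ • adjoint A₂) = 1)
    (hR₂ : (1 - z₁ • adjoint A₁ - z₂ • adjoint A₂) * R = 1)
    (hZrow : ∀ x y : H, Zrow ((WithLp.equiv 2 (H × H)).symm (x, y)) = z₁ • x + z₂ • y)
    (X : WithLp 2 (H × H)) :
    (-Arow + Dstar ∘L R ∘L Zrow ∘L DA) (DA X) = 0 ↔ Arow X = Zrow X := by
  have hAD : Arow ∘L DA = Dstar ∘L Arow := by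
    apply intertwine hDstar_pos hDA_pos hDstar_inj
    rw [hDstar_sq, hDA_sq]
    ext v
    simp only [coe_comp, Function.comp_apply, sub_apply, one_apply_eq_self, map_sub,
      row_adjoint hArow, hArow]
    abel
  have h1 : Arow (DA X) = Dstar (Arow X) := congrArg (fun T : _ →L[ℂ] H => T X) hAD
  have h2 : DA (DA X) = X - adjoint Arow (Arow X) :=
    congrArg (fun T : _ →L[ℂ] WithLp 2 (H × H) => T X) hDA_sq
  have h3 : ∀ h, Zrow (adjoint Arow h) = z₁ • adjoint A₁ h + z₂ • adjoint A₂ h := fun h => by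
    rw [row_adjoint hArow, hZrow]
  have hRl : ∀ h, R (h - z₁ • adjoint A₁ h - z₂ • adjoint A₂ h) = h := fun h =>
    congrArg (fun T : H →L[ℂ] H => T h) hR₁
  have hRinj : Function.Injective ⇑R := fun a b hab => by
    have hl : ∀ h, (1 - z₁ • adjoint A₁ - z₂ • adjoint A₂) (R h) = h := fun h =>
      congrArg (fun T : H →L[ℂ] H => T h) hR₂
    rw [← hl a, ← hl b, hab]
  simp only [add_apply, neg_apply, coe_comp, Function.comp_apply, h1, h2]
  rw [neg_add_eq_zero, hDstar_inj.eq_iff]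
  conv_lhs => lhs; rw [← hRl (Arow X)]
  rw [hRinj.eq_iff, map_sub, h3, sub_sub, sub_left_inj]

/-- Closed form of the defect operator of `L` when `L L*` is the scalar `n`, from uniqueness of positive
square roots. -/
lemma defect_scalar {E : Type*} [NormedAddCommGroup E] [InnerProductSpace ℂ E] [CompleteSpace E]
    {L : E →L[ℂ] H} {DL : E →L[ℂ] E} {n s : ℝ} (hn : 0 < n) (hs : 0 ≤ s) (hsn : s ^ 2 = 1 - n)
    (hLL : L ∘L adjoint L = (n : ℂ) • (1 : H →L[ℂ] H)) (hpos : 0 ≤ DL)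
    (hsq : DL * DL = 1 - adjoint L ∘L L) :
    DL = 1 - (((1 - s) / n : ℝ) : ℂ) • (adjoint L ∘L L) := by
  set G : E →L[ℂ] E := adjoint L ∘L L with hG
  have hGG : G * G = (n : ℂ) • G := by
    ext v
    have := congrArg (fun T : H →L[ℂ] H => T (L v)) hLL
    simp only [coe_comp, Function.comp_apply, smul_apply, one_apply_eq_self] at this
    simp [hG, this]
  have hGs : IsSelfAdjoint G := (isPositive_adjoint_comp_self L).isSelfAdjoint
  have hnC : (n : ℂ) ≠ 0 := by exact_mod_cast hn.ne'
  have hmul : ∀ a : ℂ, (1 - a • G) * (1 - a • G) = 1 - (2 * a - a ^ 2 * n) • G := by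
    intro a
    simp only [sub_mul, mul_sub, one_mul, mul_one, smul_mul_assoc, mul_smul_comm, hGG]
    module
  have hsa : ∀ a : ℝ, IsSelfAdjoint (1 - (a : ℂ) • G) := fun a =>
    (IsSelfAdjoint.one _).sub (IsSelfAdjoint.smul (by simp [IsSelfAdjoint]) hGs)
  -- `1 - (1 - s)/n • L*L` is the square of `1 - (1 - √s)/n • L*L`, hence positive.
  have hpos' : 0 ≤ 1 - (((1 - s) / n : ℝ) : ℂ) • G := by
    have h := (hsa ((1 - √s) / n)).mul_self_nonneg
    rw [hmul] at h
    convert h using 3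
    norm_cast
    have := Real.sq_sqrt hs
    field_simp
    linarith
  have hsq' : (1 - (((1 - s) / n : ℝ) : ℂ) • G) * (1 - (((1 - s) / n : ℝ) : ℂ) • G) = 1 - G := by
    rw [hmul]
    have : (2 * (((1 - s) / n : ℝ) : ℂ) - (((1 - s) / n : ℝ) : ℂ) ^ 2 * n) = 1 := by
      norm_cast
      field_simp
      linarith
    rw [this, one_smul]
  rw [← CFC.sqrt_unique hsq hpos, ← CFC.sqrt_unique hsq' hpos']

/-- The resolvent-type identity `W - B = s (1 - ZΛ*)⁻¹ (A - Z) (1 - Λ*A)⁻¹ D_Λ` comparing the Möbius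
transforms of `Z` and `A`, where `ZΛ*` is the scalar `c`. -/
lemma resolvent_identity {E : Type*} [NormedAddCommGroup E] [InnerProductSpace ℂ E]
    [CompleteSpace E] {A Z L : E →L[ℂ] H} {T₁ : H →L[ℂ] H} {S₂ DL : E →L[ℂ] E} {s c : ℂ}
    (hT₁ : T₁ * (1 - A ∘L adjoint L) = 1) (hS₂' : (1 - (adjoint L) ∘L A) * S₂ = 1)
    (hc : 1 - c ≠ 0) (hZL : ∀ h, Z (adjoint L h) = c • h) (v : E) :
    (L - (s / (1 - c)) • (Z ∘L DL)) v - (L - s • (T₁ ∘L A ∘L DL)) v =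
      (s / (1 - c)) • (A (S₂ (DL v)) - Z (S₂ (DL v))) := by
  have hS : ∀ u, S₂ u - adjoint L (A (S₂ u)) = u := fun u =>
    congrArg (fun T : E →L[ℂ] E => T u) hS₂'
  have hT : ∀ h, T₁ (h - A (adjoint L h)) = h := fun h =>
    congrArg (fun T : H →L[ℂ] H => T h) hT₁
  have h1 : T₁ (A (DL v)) = A (S₂ (DL v)) := by
    conv_lhs => rw [← hS (DL v)]
    rw [map_sub, hT]
  have h2 : Z (DL v) = Z (S₂ (DL v)) - c • A (S₂ (DL v)) := by
    rw [← hZL, ← map_sub, hS]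
  simp only [sub_apply, smul_apply, coe_comp, Function.comp_apply, h1, h2]
  match_scalars <;> field_simp <;> ring

end helpers

theorem sigma_one_corollary
    {H : Type*} [NormedAddCommGroup H] [InnerProductSpace ℂ H] [CompleteSpace H]
    (A₁ A₂ : H →L[ℂ] H)
    (hcomm : A₁ * A₂ = A₂ * A₁)
    (hcontr : A₁ * adjoint A₁ + A₂ * adjoint A₂ ≤ 1)
    (hpure : ∀ x : H, Tendsto (fun n => ((A₁ * adjoint A₁ + A₂ * adjoint A₂) ^ n) x) atTop (nhds 0))
    (Dstar : H →L[ℂ] H) (hDstar_pos : 0 ≤ Dstar)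
    (hDstar_sq : Dstar * Dstar = 1 - A₁ * adjoint A₁ - A₂ * adjoint A₂)
    (hDstar_inj : Function.Injective ⇑Dstar)
    (Arow : WithLp 2 (H × H) →L[ℂ] H)
    (hArow : ∀ x y : H, Arow ((WithLp.equiv 2 (H × H)).symm (x, y)) = A₁ x + A₂ y)
    (DA : WithLp 2 (H × H) →L[ℂ] WithLp 2 (H × H)) (hDA_pos : 0 ≤ DA)
    (hDA_sq : DA * DA = 1 - (adjoint Arow) ∘L Arow)
    (μ₁ μ₂ : ℂ) (hμ : ‖μ₁‖ ^ 2 + ‖μ₂‖ ^ 2 < 1) (hμ0 : (μ₁, μ₂) ≠ ((0 : ℂ), (0 : ℂ)))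
    (s : ℝ) (hs : s = Real.sqrt (1 - ‖μ₁‖ ^ 2 - ‖μ₂‖ ^ 2))
    (Lrow : WithLp 2 (H × H) →L[ℂ] H)
    (hLrow : ∀ x y : H, Lrow ((WithLp.equiv 2 (H × H)).symm (x, y)) = μ₁ • x + μ₂ • y)
    (DL : WithLp 2 (H × H) →L[ℂ] WithLp 2 (H × H)) (hDL_pos : 0 ≤ DL)
    (hDL_sq : DL * DL = 1 - (adjoint Lrow) ∘L Lrow)
    (T₁ : H →L[ℂ] H) (hT₁ : T₁ * (1 - Arow ∘L adjoint Lrow) = 1)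
    (hT₁' : (1 - Arow ∘L adjoint Lrow) * T₁ = 1)
    (S₂ : WithLp 2 (H × H) →L[ℂ] WithLp 2 (H × H))
    (hS₂ : S₂ * (1 - (adjoint Lrow) ∘L Arow) = 1) (hS₂' : (1 - (adjoint Lrow) ∘L Arow) * S₂ = 1)
    (B₁ B₂ : H →L[ℂ] H)
    (hB : ∀ x y : H, (Lrow - (s : ℂ) • (T₁ ∘L Arow ∘L DL)) ((WithLp.equiv 2 (H × H)).symm (x, y)) = B₁ x + B₂ y)
    (hBpure : ∀ x : H, Tendsto (fun n => ((B₁ * adjoint B₁ + B₂ * adjoint B₂) ^ n) x) atTop (nhds 0))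
    (z₁ z₂ : ℂ) (hz : ‖z₁‖ ^ 2 + ‖z₂‖ ^ 2 < 1)
    (R : H →L[ℂ] H) (hR₁ : R * (1 - z₁ • adjoint A₁ - z₂ • adjoint A₂) = 1)
    (hR₂ : (1 - z₁ • adjoint A₁ - z₂ • adjoint A₂) * R = 1)
    (Zrow : WithLp 2 (H × H) →L[ℂ] H)
    (hZrow : ∀ x y : H, Zrow ((WithLp.equiv 2 (H × H)).symm (x, y)) = z₁ • x + z₂ • y)
    (ip : ℂ) (hip : ip = z₁ * (starRingEnd ℂ) μ₁ + z₂ * (starRingEnd ℂ) μ₂)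
    (w₁ w₂ : ℂ)
    (hw₁ : w₁ = μ₁ - ((s : ℂ) / (1 - ip)) * (z₁ - (1 - (s : ℂ)) * (ip / ((‖μ₁‖ ^ 2 + ‖μ₂‖ ^ 2 : ℝ) : ℂ)) * μ₁))
    (hw₂ : w₂ = μ₂ - ((s : ℂ) / (1 - ip)) * (z₂ - (1 - (s : ℂ)) * (ip / ((‖μ₁‖ ^ 2 + ‖μ₂‖ ^ 2 : ℝ) : ℂ)) * μ₂)) :
    ((∃ x : H, x ≠ 0 ∧ A₁ x - z₁ • x = 0 ∧ A₂ x - z₂ • x = 0) ∧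
        (∃ x : H, x ≠ 0 ∧ B₁ x - w₁ • x = 0 ∧ B₂ x - w₂ • x = 0)) ↔
      ∃ x y : H, x ≠ 0 ∧ y ≠ 0 ∧
        (-Arow + Dstar ∘L R ∘L Zrow ∘L DA) (DA ((WithLp.equiv 2 (H × H)).symm (x, 0))) = 0 ∧
        (-Arow + Dstar ∘L R ∘L Zrow ∘L DA) (DA ((WithLp.equiv 2 (H × H)).symm (0, x))) = 0 ∧
        (-Arow + Dstar ∘L R ∘L Zrow ∘L DA) (DA (S₂ (DL ((WithLp.equiv 2 (H × H)).symm (y, 0))))) = 0 ∧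
        (-Arow + Dstar ∘L R ∘L Zrow ∘L DA) (DA (S₂ (DL ((WithLp.equiv 2 (H × H)).symm (0, y))))) = 0 := by
  have hθ := theta_zero_iff hDstar_pos hDstar_sq hDstar_inj hArow hDA_pos hDA_sq hR₁ hR₂ hZrow
  have hLrow' : ∀ x y : H, Lrow ((WithLp.equiv 2 (H × H)).symm (x, y)) =
      (μ₁ • (1 : H →L[ℂ] H)) x + (μ₂ • (1 : H →L[ℂ] H)) y := by simpa using hLrow
  have hLadj : ∀ h, adjoint Lrow h = (WithLp.equiv 2 (H × H)).symm
      ((starRingEnd ℂ) μ₁ • h, (starRingEnd ℂ) μ₂ • h) := fun h => by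
    rw [row_adjoint hLrow']
    simp [← star_eq_adjoint]
  have hn : 0 < ‖μ₁‖ ^ 2 + ‖μ₂‖ ^ 2 := by
    by_contra hcon
    have h1 : ‖μ₁‖ ^ 2 = 0 := by nlinarith [sq_nonneg ‖μ₁‖, sq_nonneg ‖μ₂‖]
    have h2 : ‖μ₂‖ ^ 2 = 0 := by nlinarith [sq_nonneg ‖μ₁‖, sq_nonneg ‖μ₂‖]
    exact hμ0 (by simp_all)
  have hs0 : 0 < s := by rw [hs]; exact Real.sqrt_pos.2 (by linarith)
  have hs2 : s ^ 2 = 1 - (‖μ₁‖ ^ 2 + ‖μ₂‖ ^ 2) := by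
    rw [hs, Real.sq_sqrt (by linarith)]; ring
  have hip1 : 1 - ip ≠ 0 := by
    intro h
    have h1 : ‖ip‖ ≤ ‖z₁‖ * ‖μ₁‖ + ‖z₂‖ * ‖μ₂‖ := by
      rw [hip]; refine (norm_add_le _ _).trans (by simp)
    rw [← sub_eq_zero.1 h, norm_one] at h1
    nlinarith [sq_nonneg (‖z₁‖ - ‖μ₁‖), sq_nonneg (‖z₂‖ - ‖μ₂‖)]
  have hZL : ∀ h, Zrow (adjoint Lrow h) = ip • h := fun h => by
    rw [hLadj, hZrow, hip]; module
  have hDL := defect_scalar hn hs0.le hs2 (L := Lrow) (DL := DL) (by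
    ext h
    simp only [coe_comp, Function.comp_apply, hLadj, hLrow, smul_apply, one_apply_eq_self,
      smul_smul, ← add_smul, Complex.mul_conj, Complex.normSq_eq_norm_sq]
    push_cast; rfl) hDL_pos hDL_sq
  have hZDL : ∀ v, Zrow (DL v) = Zrow v -
      (((1 - s) / (‖μ₁‖ ^ 2 + ‖μ₂‖ ^ 2) : ℝ) : ℂ) • ip • Lrow v := fun v => by
    rw [hDL]; simp [hZL]
  -- The row `W` of the scalars `w₁, w₂` is `Λ - s (1 - ZΛ*)⁻¹ Z D_Λ`.
  have hW : ∀ x y : H, w₁ • x + w₂ • y =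
      (Lrow - ((s : ℂ) / (1 - ip)) • (Zrow ∘L DL)) ((WithLp.equiv 2 (H × H)).symm (x, y)) := by
    intro x y
    simp only [sub_apply, smul_apply, coe_comp, Function.comp_apply, hZDL, hLrow, hZrow]
    rw [hw₁, hw₂]
    push_cast
    module
  have hkey : ∀ v, Arow (S₂ (DL v)) = Zrow (S₂ (DL v)) ↔
      (Lrow - (s : ℂ) • (T₁ ∘L Arow ∘L DL)) v =
      (Lrow - ((s : ℂ) / (1 - ip)) • (Zrow ∘L DL)) v := by
    intro v
    have hc : (s : ℂ) / (1 - ip) ≠ 0 := div_ne_zero (by exact_mod_cast hs0.ne') hip1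
    rw [eq_comm (b := (Lrow - ((s : ℂ) / (1 - ip)) • (Zrow ∘L DL)) v), ← sub_eq_zero,
      ← sub_eq_zero (b := (Lrow - (s : ℂ) • (T₁ ∘L Arow ∘L DL)) v),
      resolvent_identity hT₁ hS₂' hip1 hZL, smul_eq_zero_iff_right hc]
  simp only [hθ, hkey, ← hW, hArow, hZrow, hB, map_zero, smul_zero, add_zero, zero_add, sub_eq_zero]
  constructor
  · rintro ⟨⟨x, hx, h1, h2⟩, y, hy, h3, h4⟩
    exact ⟨x, y, hx, hy, h1, h2, h3, h4⟩
  · rintro ⟨x, y, hx, hy, h1, h2, h3, h4⟩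
    exact ⟨⟨x, hx, h1, h2⟩, y, hy, h3, h4⟩
end
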